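/- arXiv:1906.02612 — 11 statements merged into one kernel-verified Lean document; each statement's English description precedes it below -/
import Mathlib

section
/- Let A ∈ [0,1), and on the real line write f_A(α) = θ_A(α) + iτ_A(α) with θ_A(α) = Re f_A(α) and τ_A(α) = Im f_A(α), where f_A(α) = 2i·Log((1+Ae^{−iα})/(1−Ae^{−iα})). Set q = (1+A²)/(1−A²). Then θ_A is differentiable on ℝ and for every α ∈ ℝ one has q·θ_A′(α) = sinh(τ_A(α)). Equivalently, Crapper's function f_A is an exact solution of Levi-Civita's pure capillary wave equation on the boundary of the lower half-plane with surface tension parameter q. -/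
open Complex Real

/-- Crapper's analytic function `f_A`, evaluated at a complex point. -/
noncomputable def crapperF (A : ℝ) (w : ℂ) : ℂ :=
  2 * Complex.I *
    Complex.log ((1 + (A : ℂ) * Complex.exp (-Complex.I * w)) /
      (1 - (A : ℂ) * Complex.exp (-Complex.I * w)))

/-!
Put `ζ = A e^{-iw}` and `M = (1 + ζ) / (1 - ζ)`, so that `f_A = 2i Log M`. Since `ζ' = -iζ`, the
function `M` satisfies the Riccati equation `M' = -(i/2) (M² - 1)`, hence `f_A' = M - M⁻¹` and
`θ' = Re M · (1 - |M|⁻²)`, while `τ = 2 log |M|` gives `sinh τ = (|M|² - |M|⁻²) / 2`. Thus `sinh τ`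
is `(|M|² + 1) / (2 Re M)` times `θ'`. This factor equals `(1 + |ζ|²) / (1 - |ζ|²)`, which is
constant on the real line because `|ζ| = |A|` there.
-/

section Cayley

/-- The Cayley transform, which maps the open unit disc onto the open right half-plane. It is
defined on all of `ℂ`, with the junk value `0` at the pole `1`. -/
noncomputable def cayley (ζ : ℂ) : ℂ := (1 + ζ) / (1 - ζ)

variable {ζ : ℂ}

theorem cayley_re (ζ : ℂ) : (cayley ζ).re = (1 - ‖ζ‖ ^ 2) / ‖1 - ζ‖ ^ 2 := by
  simpa [cayley, poissonKernel, herglotzRieszKernel] using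
    (congrFun (poissonKernel_eq_re_herglotzRieszKernel (c := 0) (w := ζ)) 1).symm

theorem ne_one_of_norm_lt_one (hζ : ‖ζ‖ < 1) : ζ ≠ 1 := by
  rintro rfl
  simp at hζ

theorem cayley_re_pos (hζ : ‖ζ‖ < 1) : 0 < (cayley ζ).re := by
  have hden : 0 < ‖1 - ζ‖ := norm_sub_pos_iff.2 (ne_one_of_norm_lt_one hζ).symm
  have hnum : 0 < 1 - ‖ζ‖ ^ 2 := sub_pos.2 (pow_lt_one₀ (norm_nonneg ζ) hζ two_ne_zero)
  rw [cayley_re]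
  positivity

theorem norm_cayley_sq_add_one (hζ : ζ ≠ 1) :
    ‖cayley ζ‖ ^ 2 + 1 = 2 * (1 + ‖ζ‖ ^ 2) / ‖1 - ζ‖ ^ 2 := by
  have hden : ‖1 - ζ‖ ≠ 0 := norm_ne_zero_iff.2 (sub_ne_zero.2 hζ.symm)
  have hparallelogram := parallelogram_law_with_norm ℝ 1 ζ
  rw [norm_one] at hparallelogram
  rw [cayley, norm_div]
  field_simp
  linear_combination hparallelogram

theorem norm_cayley_sq_add_one_div_two_mul_re (hζ : ζ ≠ 1) :
    (‖cayley ζ‖ ^ 2 + 1) / (2 * (cayley ζ).re) = (1 + ‖ζ‖ ^ 2) / (1 - ‖ζ‖ ^ 2) := by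
  have hden : ‖1 - ζ‖ ^ 2 ≠ 0 := pow_ne_zero 2 (norm_ne_zero_iff.2 (sub_ne_zero.2 hζ.symm))
  rw [norm_cayley_sq_add_one hζ, cayley_re, ← mul_div_assoc, div_div_div_cancel_right₀ hden,
    mul_div_mul_left _ _ two_ne_zero]

theorem hasDerivAt_cayley (hζ : ζ ≠ 1) : HasDerivAt cayley (2 / (1 - ζ) ^ 2) ζ := by
  refine (((hasDerivAt_id ζ).const_add 1).fun_div ((hasDerivAt_id ζ).const_sub 1)
    (sub_ne_zero.2 hζ.symm)).congr_deriv ?_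
  simp only [id_eq]
  ring

theorem cayley_sq_sub_one (hζ : ζ ≠ 1) : cayley ζ ^ 2 - 1 = 4 * ζ / (1 - ζ) ^ 2 := by
  have hden : 1 - ζ ≠ 0 := sub_ne_zero.2 hζ.symm
  rw [cayley]
  field_simp
  ring

end Cayley

section RightHalfPlane

variable {M : ℂ}

theorem re_sub_inv (M : ℂ) : (M - M⁻¹).re = M.re * (1 - (‖M‖ ^ 2)⁻¹) := by
  rw [sub_re, inv_re, ← Complex.sq_norm]
  ring

theorem sinh_two_mul_log_norm (hM : M ≠ 0) :
    Real.sinh (2 * Real.log ‖M‖) = (‖M‖ ^ 2 - (‖M‖ ^ 2)⁻¹) / 2 := by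
  have hnorm : 0 < ‖M‖ ^ 2 := by positivity
  rw [← Real.sinh_log hnorm, Real.log_pow, Nat.cast_ofNat]

theorem re_sub_inv_mul_eq_sinh (hM : M.re ≠ 0) :
    (‖M‖ ^ 2 + 1) / (2 * M.re) * (M - M⁻¹).re = Real.sinh (2 * Real.log ‖M‖) := by
  have hM₀ : M ≠ 0 := fun h ↦ hM (by rw [h, zero_re])
  have hnorm : ‖M‖ ≠ 0 := norm_ne_zero_iff.2 hM₀
  rw [re_sub_inv, sinh_two_mul_log_norm hM₀]
  field_simp
  ring

end RightHalfPlane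

section Crapper

/-- The variable `ζ = A e^{-iw}`, in which Crapper's function is `2i` times the logarithm of the
Cayley transform. -/
noncomputable def crapperVar (A : ℝ) (w : ℂ) : ℂ := A * Complex.exp (-Complex.I * w)

variable {A : ℝ} {w : ℂ}

theorem norm_crapperVar (A : ℝ) (w : ℂ) : ‖crapperVar A w‖ = |A| * Real.exp w.im := by
  simp [crapperVar, Complex.norm_exp]

theorem norm_crapperVar_ofReal (A α : ℝ) : ‖crapperVar A α‖ = |A| := by
  simp [norm_crapperVar]

theorem hasDerivAt_crapperVar (A : ℝ) (w : ℂ) :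
    HasDerivAt (crapperVar A) (-Complex.I * crapperVar A w) w := by
  refine (((hasDerivAt_id w).const_mul (-Complex.I)).cexp.const_mul (A : ℂ)).congr_deriv ?_
  simp only [crapperVar, id_eq]
  ring

theorem crapperF_eq (A : ℝ) (w : ℂ) :
    crapperF A w = 2 * Complex.I * Complex.log (cayley (crapperVar A w)) :=
  rfl

theorem crapperF_im (A : ℝ) (w : ℂ) :
    (crapperF A w).im = 2 * Real.log ‖cayley (crapperVar A w)‖ := by
  simp [crapperF_eq, Complex.log_re]

theorem hasDerivAt_cayley_crapperVar (hw : crapperVar A w ≠ 1) :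
    HasDerivAt (fun z ↦ cayley (crapperVar A z))
      (-(Complex.I / 2) * (cayley (crapperVar A w) ^ 2 - 1)) w := by
  refine ((hasDerivAt_cayley hw).comp w (hasDerivAt_crapperVar A w)).congr_deriv ?_
  rw [cayley_sq_sub_one hw]
  ring

theorem hasDerivAt_crapperF (hw : ‖crapperVar A w‖ < 1) :
    HasDerivAt (crapperF A) (cayley (crapperVar A w) - (cayley (crapperVar A w))⁻¹) w := by
  have hslit : cayley (crapperVar A w) ∈ slitPlane := .inl (cayley_re_pos hw)
  have hM : cayley (crapperVar A w) ≠ 0 := slitPlane_ne_zero hslit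
  refine (((hasDerivAt_cayley_crapperVar (ne_one_of_norm_lt_one hw)).clog hslit).const_mul
    (2 * Complex.I)).congr_deriv ?_
  field_simp
  linear_combination (1 - cayley (crapperVar A w) ^ 2) * Complex.I_sq

theorem re_deriv_crapperF_mul_eq_sinh_im (hw : ‖crapperVar A w‖ < 1) :
    (1 + ‖crapperVar A w‖ ^ 2) / (1 - ‖crapperVar A w‖ ^ 2) * (deriv (crapperF A) w).re =
      Real.sinh (crapperF A w).im := by
  rw [(hasDerivAt_crapperF hw).deriv, crapperF_im,
    ← norm_cayley_sq_add_one_div_two_mul_re (ne_one_of_norm_lt_one hw),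
    re_sub_inv_mul_eq_sinh (cayley_re_pos hw).ne']

end Crapper

theorem crapper_solves_leviCivita_general (A : ℝ) (hA : |A| < 1)
    (θ τ : ℝ → ℝ)
    (hθ : ∀ α : ℝ, θ α = (crapperF A (α : ℂ)).re)
    (hτ : ∀ α : ℝ, τ α = (crapperF A (α : ℂ)).im)
    (q : ℝ) (hq : q = (1 + A ^ 2) / (1 - A ^ 2)) :
    Differentiable ℝ θ ∧ ∀ α : ℝ, q * deriv θ α = Real.sinh (τ α) := by
  have hdisc (α : ℝ) : ‖crapperVar A α‖ < 1 := by rwa [norm_crapperVar_ofReal]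
  have hderiv (α : ℝ) : HasDerivAt θ (deriv (crapperF A) α).re α := by
    rw [funext hθ]
    exact (hasDerivAt_crapperF (hdisc α)).differentiableAt.hasDerivAt.real_of_complex
  refine ⟨fun α ↦ (hderiv α).differentiableAt, fun α ↦ ?_⟩
  rw [(hderiv α).deriv, hτ, hq, ← re_deriv_crapperF_mul_eq_sinh_im (hdisc α),
    norm_crapperVar_ofReal, sq_abs]

/-- For `A ∈ [0,1)`, writing `f_A(α) = θ_A(α) + i τ_A(α)` on the real line
and `q = (1+A²)/(1−A²)`, the function `θ_A` is differentiable on `ℝ` and satisfies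
Levi-Civita's pure capillary wave equation `q·θ_A′(α) = sinh(τ_A(α))` for every `α`. -/
theorem crapper_solves_leviCivita (A : ℝ) (hA : A ∈ Set.Ico (0 : ℝ) 1)
    (θ τ : ℝ → ℝ)
    (hθ : ∀ α : ℝ, θ α = (crapperF A (α : ℂ)).re)
    (hτ : ∀ α : ℝ, τ α = (crapperF A (α : ℂ)).im)
    (q : ℝ) (hq : q = (1 + A ^ 2) / (1 - A ^ 2)) :
    Differentiable ℝ θ ∧ ∀ α : ℝ, q * deriv θ α = Real.sinh (τ α) :=
  crapper_solves_leviCivita_general A ((abs_of_nonneg hA.1).trans_lt hA.2) θ τ hθ hτ q hq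
end

section
/- There exist A ∈ (0,1) and α ∈ (0,π) such that the Crapper wave profile z_A satisfies z_A(α) = z_A(−α). That is, for sufficiently large values of the parameter A < 1, the Crapper curve self-intersects (it has a splash point on the imaginary axis). -/
/-!
Since `z_A(-α) = -conj z_A(α)`, the points with parameters `±α` coincide exactly when
`Re z_A(α) = 0`, that is when `α (1 + 2A cos α + A²) - 4A sin α` vanishes. This function is negative
at `α = π / 2` when `π (1 + A²) < 8A`, and equals `π (1 - A)² > 0` at `α = π`, so it has a zero in
between.
-/

open Complex Real

/-- The Crapper wave profile `z_A(α) = α + 4i/(1+Ae^{−iα}) − 4i`. -/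
noncomputable def crapperZ (A : ℝ) (α : ℝ) : ℂ :=
  (α : ℂ) + 4 * Complex.I / (1 + (A : ℂ) * Complex.exp (-Complex.I * (α : ℂ)))
    - 4 * Complex.I

section

variable (A α : ℝ)

lemma crapperZ_neg : crapperZ A (-α) = -(starRingEnd ℂ) (crapperZ A α) := by
  simp only [crapperZ, map_sub, map_add, map_div₀, map_mul, map_neg, map_one, map_ofNat,
    conj_ofReal, conj_I, ← exp_conj, ofReal_neg, neg_neg, mul_neg, neg_mul]
  ring

lemma crapperZ_eq_crapperZ_neg_iff : crapperZ A α = crapperZ A (-α) ↔ (crapperZ A α).re = 0 := by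
  rw [crapperZ_neg, Complex.ext_iff, neg_re, neg_im, conj_re, conj_im, neg_neg, self_eq_neg]
  exact and_iff_left rfl

lemma one_add_mul_exp_re : (1 + A * Complex.exp (-Complex.I * α)).re = 1 + A * Real.cos α := by
  simp [exp_re]

lemma one_add_mul_exp_im : (1 + A * Complex.exp (-Complex.I * α)).im = -(A * Real.sin α) := by
  simp [exp_im]

lemma normSq_one_add_mul_exp :
    normSq (1 + A * Complex.exp (-Complex.I * α)) = 1 + 2 * A * Real.cos α + A ^ 2 := by
  rw [normSq_apply, one_add_mul_exp_re, one_add_mul_exp_im]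
  linear_combination A ^ 2 * Real.sin_sq_add_cos_sq α

lemma crapperZ_re :
    (crapperZ A α).re = α - 4 * A * Real.sin α / (1 + 2 * A * Real.cos α + A ^ 2) := by
  have re_four_mul_I : (4 * Complex.I).re = 0 := by simp
  have im_four_mul_I : (4 * Complex.I).im = 4 := by simp
  rw [crapperZ, sub_re, add_re, ofReal_re, div_re, normSq_one_add_mul_exp, one_add_mul_exp_im,
    re_four_mul_I, im_four_mul_I]
  ring

end

lemma one_add_two_mul_cos_add_sq_pos (A : ℝ) {α : ℝ} (hα : Real.sin α ≠ 0) :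
    0 < 1 + 2 * A * Real.cos α + A ^ 2 :=
  calc
    0 < (A + Real.cos α) ^ 2 + Real.sin α ^ 2 := by positivity
    _ = 1 + 2 * A * Real.cos α + A ^ 2 := by
      linear_combination Real.sin_sq_add_cos_sq α

lemma crapperZ_re_eq_zero_iff (A : ℝ) {α : ℝ} (hα : Real.sin α ≠ 0) :
    (crapperZ A α).re = 0 ↔ α * (1 + 2 * A * Real.cos α + A ^ 2) - 4 * A * Real.sin α = 0 := by
  rw [crapperZ_re, sub_eq_zero, sub_eq_zero,
    eq_div_iff (one_add_two_mul_cos_add_sq_pos A hα).ne']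

theorem crapper_selfIntersects_general {A : ℝ} (hA_ne : A ≠ 1)
    (hA : Real.pi * (1 + A ^ 2) < 8 * A) :
    ∃ α ∈ Set.Ioo (Real.pi / 2) Real.pi, crapperZ A α = crapperZ A (-α) := by
  let f (α : ℝ) : ℝ := α * (1 + 2 * A * Real.cos α + A ^ 2) - 4 * A * Real.sin α
  have hf : Continuous f := by fun_prop
  have hf_left : f (Real.pi / 2) < 0 := by
    simp only [f, Real.cos_pi_div_two, Real.sin_pi_div_two]
    linarith
  have hf_right : 0 < f Real.pi :=
    calc
      0 < Real.pi * (1 - A) ^ 2 :=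
        mul_pos Real.pi_pos (sq_pos_of_ne_zero (sub_ne_zero.2 hA_ne.symm))
      _ = f Real.pi := by
        simp only [f, Real.cos_pi, Real.sin_pi]
        ring
  obtain ⟨α, hα, hfα⟩ :=
    intermediate_value_Ioo (half_le_self Real.pi_nonneg) hf.continuousOn ⟨hf_left, hf_right⟩
  have hsin : Real.sin α ≠ 0 :=
    (Real.sin_pos_of_pos_of_lt_pi (Real.pi_div_two_pos.trans hα.1) hα.2).ne'
  exact ⟨α, hα, (crapperZ_eq_crapperZ_neg_iff A α).2 ((crapperZ_re_eq_zero_iff A hsin).2 hfα)⟩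

/-- There exist `A ∈ (0,1)` and `α ∈ (0,π)` such that the Crapper curve
self-intersects: `z_A(α) = z_A(−α)`. -/
theorem crapper_selfIntersects :
    ∃ A ∈ Set.Ioo (0 : ℝ) 1, ∃ α ∈ Set.Ioo (0 : ℝ) Real.pi,
      crapperZ A α = crapperZ A (-α) := by
  obtain ⟨α, hα, h⟩ := crapper_selfIntersects_general (A := 1 / 2) (by norm_num)
    (by linarith [Real.pi_lt_d2])
  exact ⟨1 / 2, by norm_num, α, ⟨Real.pi_div_two_pos.trans hα.1, hα.2⟩, h⟩
end

section
/- (Hardy's inequality, continuity of the left Hardy operator.) Let 1 < p < ∞, 0 < R < ∞, and β, γ ∈ ℝ satisfy β + 1/p < 1 and γ ≥ β − 1. Then there exists a constant C > 0 such that for every measurable function f : (0,R) → [0,∞), ∫₀^R x^{γp} (∫₀^x f(t) dt)^p dx ≤ C^p ∫₀^R x^{βp} f(x)^p dx. In other words, the Hardy operator f ↦ (x ↦ ∫₀^x f(t)dt) is continuous from L_{p,β}((0,R)) to L_{p,γ}((0,R)). -/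
open MeasureTheory Set ENNReal

/-!
Let `α = 1 - β - 1 / p > 0`. Hölder's inequality against the weight `w t = t ^ (α - 1)` bounds
`(∫₀ˣ f) ^ p` by `(x ^ α / α) ^ (p - 1) * ∫₀ˣ w ^ (1 - p) * f ^ p`. Multiplying by
`x ^ ((β - 1) * p)`, integrating over the half-line and exchanging the integrals leaves the tail
`∫ₜ^∞ x ^ (-α - 1) dx = t ^ (-α) / α`, so Hardy's inequality holds there for `γ = β - 1` with
constant `1 / α`; this power weight is the one for which the argument yields the sharp constant.
On `(0, R)` a larger `γ` only costs the factor `x ^ (γ - (β - 1)) ≤ R ^ (γ - (β - 1))`.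
-/

section General

variable {X : Type*} [MeasurableSpace X]

lemma rpow_lintegral_le_rpow_lintegral_mul_lintegral {μ : Measure X} {p : ℝ} (hp : 1 ≤ p)
    {w f : X → ℝ≥0∞} (hw : AEMeasurable w μ) (hf : AEMeasurable f μ) (hw₀ : ∀ᵐ x ∂μ, w x ≠ 0)
    (hw_top : ∀ᵐ x ∂μ, w x ≠ ∞) :
    (∫⁻ x, f x ∂μ) ^ p ≤
      (∫⁻ x, w x ∂μ) ^ (p - 1) * ∫⁻ x, w x ^ (1 - p) * f x ^ p ∂μ := by
  have hp₀ : 0 < p := by linarith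
  have factor : ∀ᵐ x ∂μ, f x = w x ^ (1 - p⁻¹) * (w x ^ (1 - p) * f x ^ p) ^ p⁻¹ := by
    filter_upwards [hw₀, hw_top] with x h₀ h_top
    rw [mul_rpow_of_nonneg _ _ (by positivity), ← rpow_mul, ← rpow_mul, ← mul_assoc,
      ← rpow_add _ _ h₀ h_top, mul_inv_cancel₀ hp₀.ne', rpow_one]
    have : 1 - p⁻¹ + (1 - p) * p⁻¹ = 0 := by field_simp; ring
    rw [this, rpow_zero, one_mul]
  have holder : ∫⁻ x, f x ∂μ ≤
      (∫⁻ x, w x ∂μ) ^ (1 - p⁻¹) * (∫⁻ x, w x ^ (1 - p) * f x ^ p ∂μ) ^ p⁻¹ := by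
    rw [lintegral_congr_ae factor]
    exact lintegral_mul_norm_pow_le hw (by fun_prop) (sub_nonneg.2 (inv_le_one_of_one_le₀ hp))
      (by positivity) (by ring)
  calc (∫⁻ x, f x ∂μ) ^ p
      ≤ ((∫⁻ x, w x ∂μ) ^ (1 - p⁻¹) * (∫⁻ x, w x ^ (1 - p) * f x ^ p ∂μ) ^ p⁻¹) ^ p := by
        gcongr
    _ = _ := by
        rw [mul_rpow_of_nonneg _ _ hp₀.le, ← rpow_mul, ← rpow_mul, sub_mul,
          inv_mul_cancel₀ hp₀.ne', rpow_one, one_mul]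

lemma lintegral_mul_setLIntegral_Iio_eq [TopologicalSpace X] [LinearOrder X]
    [OrderClosedTopology X] [SecondCountableTopology X] [OpensMeasurableSpace X]
    {μ ν : Measure X} [SFinite μ] [SFinite ν] {u g : X → ℝ≥0∞}
    (hu : AEMeasurable u μ) (hg : AEMeasurable g ν) :
    ∫⁻ x, u x * ∫⁻ t in Iio x, g t ∂ν ∂μ = ∫⁻ t, (∫⁻ x in Ioi t, u x ∂μ) * g t ∂ν := by
  have hm : AEMeasurable ({z : X × X | z.2 < z.1}.indicator fun z ↦ u z.1 * g z.2) (μ.prod ν) :=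
    (hu.comp_fst.mul hg.comp_snd).indicator (measurableSet_lt measurable_snd measurable_fst)
  calc ∫⁻ x, u x * ∫⁻ t in Iio x, g t ∂ν ∂μ
      = ∫⁻ x, ∫⁻ t, {z : X × X | z.2 < z.1}.indicator (fun z ↦ u z.1 * g z.2) (x, t) ∂ν ∂μ := by
        refine lintegral_congr fun x ↦ ?_
        rw [← lintegral_const_mul'' _ hg.restrict, ← lintegral_indicator measurableSet_Iio]
        rfl
    _ = ∫⁻ t, ∫⁻ x, {z : X × X | z.2 < z.1}.indicator (fun z ↦ u z.1 * g z.2) (x, t) ∂μ ∂ν :=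
        lintegral_lintegral_swap hm
    _ = ∫⁻ t, (∫⁻ x in Ioi t, u x ∂μ) * g t ∂ν := by
        refine lintegral_congr fun t ↦ ?_
        rw [← lintegral_mul_const'' _ hu.restrict, ← lintegral_indicator measurableSet_Ioi]
        rfl

end General

lemma lintegral_Ioo_zero_rpow {r x : ℝ} (hr : -1 < r) (hx : 0 ≤ x) :
    ∫⁻ t in Ioo 0 x, ENNReal.ofReal (t ^ r) = ENNReal.ofReal (x ^ (r + 1) / (r + 1)) := by
  have hint : IntegrableOn (fun t : ℝ ↦ t ^ r) (Ioo 0 x) :=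
    (intervalIntegrable_iff_integrableOn_Ioo_of_le hx).1
      (intervalIntegral.intervalIntegrable_rpow' hr)
  rw [← ofReal_integral_eq_lintegral_ofReal hint, ← integral_Ioc_eq_integral_Ioo,
    ← intervalIntegral.integral_of_le hx, integral_rpow (.inl hr),
    Real.zero_rpow (by linarith), sub_zero]
  filter_upwards [ae_restrict_mem measurableSet_Ioo] with t ht
  exact Real.rpow_nonneg ht.1.le _

lemma lintegral_Ioi_rpow_of_lt {r t : ℝ} (hr : r < -1) (ht : 0 < t) :
    ∫⁻ x in Ioi t, ENNReal.ofReal (x ^ r) = ENNReal.ofReal (-t ^ (r + 1) / (r + 1)) := by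
  rw [← ofReal_integral_eq_lintegral_ofReal (integrableOn_Ioi_rpow_of_lt hr ht),
    integral_Ioi_rpow_of_lt hr ht]
  filter_upwards [ae_restrict_mem measurableSet_Ioi] with x hx
  exact Real.rpow_nonneg (ht.trans hx).le _

lemma setLIntegral_Ioi_zero_mul_lintegral_Ioo_eq {u g : ℝ → ℝ≥0∞}
    (hu : AEMeasurable u (volume.restrict (Ioi 0)))
    (hg : AEMeasurable g (volume.restrict (Ioi 0))) :
    ∫⁻ x in Ioi 0, u x * ∫⁻ t in Ioo 0 x, g t = ∫⁻ t in Ioi 0, (∫⁻ x in Ioi t, u x) * g t := by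
  have swap := lintegral_mul_setLIntegral_Iio_eq hu hg
  simp only [Measure.restrict_restrict measurableSet_Iio,
    Measure.restrict_restrict measurableSet_Ioi, Iio_inter_Ioi, Ioi_inter_Ioi] at swap
  rw [swap]
  refine setLIntegral_congr_fun measurableSet_Ioi fun t ht ↦ ?_
  simp only [sup_eq_left.2 (mem_Ioi.1 ht).le]

section Hardy

variable {p α : ℝ}

lemma rpow_lintegral_Ioo_zero_le {x : ℝ} (hp : 1 ≤ p) (hα : 0 < α) (hx : 0 ≤ x) {f : ℝ → ℝ≥0∞}
    (hf : AEMeasurable f (volume.restrict (Ioo 0 x))) :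
    (∫⁻ t in Ioo 0 x, f t) ^ p ≤ ENNReal.ofReal (x ^ α / α) ^ (p - 1) *
      ∫⁻ t in Ioo 0 x, ENNReal.ofReal (t ^ ((1 - α) * (p - 1))) * f t ^ p := by
  have holder := rpow_lintegral_le_rpow_lintegral_mul_lintegral hp
    (w := fun t ↦ ENNReal.ofReal (t ^ (α - 1))) (by fun_prop) hf
    (by
      filter_upwards [ae_restrict_mem measurableSet_Ioo] with t ht
      exact (ofReal_pos.2 (Real.rpow_pos_of_pos ht.1 _)).ne')
    (.of_forall fun _ ↦ ofReal_ne_top)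
  rw [lintegral_Ioo_zero_rpow (by linarith) hx, sub_add_cancel] at holder
  refine holder.trans_eq (congrArg _ <| setLIntegral_congr_fun measurableSet_Ioo fun t ht ↦ ?_)
  rw [ofReal_rpow_of_pos (Real.rpow_pos_of_pos ht.1 _), ← Real.rpow_mul ht.1.le]
  congr 3
  ring

lemma rpow_mul_rpow_lintegral_Ioo_zero_le {x : ℝ} (hp : 1 ≤ p) (hα : 0 < α) (hx : 0 < x)
    {f : ℝ → ℝ≥0∞} (hf : AEMeasurable f (volume.restrict (Ioo 0 x))) :
    ENNReal.ofReal (x ^ (-(α * p) - 1)) * (∫⁻ t in Ioo 0 x, f t) ^ p ≤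
      ENNReal.ofReal α⁻¹ ^ (p - 1) * (ENNReal.ofReal (x ^ (-α - 1)) *
        ∫⁻ t in Ioo 0 x, ENNReal.ofReal (t ^ ((1 - α) * (p - 1))) * f t ^ p) := by
  have weight_mul : ENNReal.ofReal (x ^ (-(α * p) - 1)) * ENNReal.ofReal (x ^ α / α) ^ (p - 1) =
      ENNReal.ofReal α⁻¹ ^ (p - 1) * ENNReal.ofReal (x ^ (-α - 1)) := by
    rw [ofReal_rpow_of_pos (by positivity), ofReal_rpow_of_pos (by positivity),
      ← ofReal_mul (by positivity), ← ofReal_mul (by positivity), div_eq_mul_inv,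
      Real.mul_rpow (by positivity) (by positivity), ← Real.rpow_mul hx.le, ← mul_assoc,
      ← Real.rpow_add hx, mul_comm]
    congr 3
    ring
  rw [← mul_assoc, ← weight_mul, mul_assoc]
  gcongr
  exact rpow_lintegral_Ioo_zero_le hp hα hx.le hf

lemma lintegral_Ioi_rpow_mul_rpow {s t : ℝ} (hα : 0 < α) (ht : 0 < t) :
    (∫⁻ x in Ioi t, ENNReal.ofReal (x ^ (-α - 1))) * ENNReal.ofReal (t ^ s) =
      ENNReal.ofReal α⁻¹ * ENNReal.ofReal (t ^ (s - α)) := by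
  rw [lintegral_Ioi_rpow_of_lt (by linarith) ht, sub_add_cancel, neg_div_neg_eq,
    ← ofReal_mul (by positivity), ← ofReal_mul (by positivity), sub_eq_add_neg, Real.rpow_add ht]
  ring_nf

theorem lintegral_Ioi_rpow_mul_rpow_lintegral_Ioo_le (hp : 1 ≤ p) (hα : 0 < α) (f : ℝ → ℝ≥0∞) :
    ∫⁻ x in Ioi 0, ENNReal.ofReal (x ^ (-(α * p) - 1)) * (∫⁻ t in Ioo 0 x, f t) ^ p ≤
      ENNReal.ofReal α⁻¹ ^ p *
        ∫⁻ t in Ioi 0, ENNReal.ofReal (t ^ (p - 1 - α * p)) * f t ^ p := by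
  wlog hf : Measurable f generalizing f
  · -- Lower integrals of `f` are integrals of a measurable minorant, so `f` may be any function.
    obtain ⟨g, hg, hgf, hfg⟩ := exists_measurable_le_forall_setLIntegral_eq volume f
    simp only [hfg]
    exact (this g hg).trans (by gcongr; exact hgf _)
  set g : ℝ → ℝ≥0∞ := fun t ↦ ENNReal.ofReal (t ^ ((1 - α) * (p - 1))) * f t ^ p
  have hg : Measurable g := by fun_prop
  have hc : ENNReal.ofReal α⁻¹ ^ (p - 1) ≠ ∞ := rpow_ne_top_of_nonneg (by linarith) ofReal_ne_top
  have tail_mul (t : ℝ) (ht : t ∈ Ioi 0) :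
      (∫⁻ x in Ioi t, ENNReal.ofReal (x ^ (-α - 1))) * g t =
        ENNReal.ofReal α⁻¹ * (ENNReal.ofReal (t ^ (p - 1 - α * p)) * f t ^ p) := by
    rw [← mul_assoc, lintegral_Ioi_rpow_mul_rpow hα ht, ← mul_assoc]
    ring_nf
  calc ∫⁻ x in Ioi 0, ENNReal.ofReal (x ^ (-(α * p) - 1)) * (∫⁻ t in Ioo 0 x, f t) ^ p
      ≤ ∫⁻ x in Ioi 0, ENNReal.ofReal α⁻¹ ^ (p - 1) *
          (ENNReal.ofReal (x ^ (-α - 1)) * ∫⁻ t in Ioo 0 x, g t) := by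
        refine setLIntegral_mono' measurableSet_Ioi fun x hx ↦ ?_
        exact rpow_mul_rpow_lintegral_Ioo_zero_le hp hα hx hf.aemeasurable
    _ = ENNReal.ofReal α⁻¹ ^ (p - 1) *
          ∫⁻ t in Ioi 0, (∫⁻ x in Ioi t, ENNReal.ofReal (x ^ (-α - 1))) * g t := by
        rw [lintegral_const_mul' _ _ hc,
          setLIntegral_Ioi_zero_mul_lintegral_Ioo_eq (by fun_prop) hg.aemeasurable]
    _ = ENNReal.ofReal α⁻¹ ^ (p - 1) * (ENNReal.ofReal α⁻¹ *
          ∫⁻ t in Ioi 0, ENNReal.ofReal (t ^ (p - 1 - α * p)) * f t ^ p) := by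
        rw [← lintegral_const_mul' _ _ ofReal_ne_top,
          setLIntegral_congr_fun measurableSet_Ioi tail_mul]
    _ = _ := by
        rw [← mul_assoc]
        nth_rw 2 [← rpow_one (ENNReal.ofReal α⁻¹)]
        rw [← rpow_add _ _ (by simpa) ofReal_ne_top, sub_add_cancel]

theorem lintegral_Ioo_rpow_mul_rpow_lintegral_Ioo_le (hp : 1 ≤ p) (hα : 0 < α) (R : ℝ)
    (f : ℝ → ℝ≥0∞) :
    ∫⁻ x in Ioo 0 R, ENNReal.ofReal (x ^ (-(α * p) - 1)) * (∫⁻ t in Ioo 0 x, f t) ^ p ≤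
      ENNReal.ofReal α⁻¹ ^ p *
        ∫⁻ t in Ioo 0 R, ENNReal.ofReal (t ^ (p - 1 - α * p)) * f t ^ p := by
  have hp₀ : 0 < p := by linarith
  calc ∫⁻ x in Ioo 0 R, ENNReal.ofReal (x ^ (-(α * p) - 1)) * (∫⁻ t in Ioo 0 x, f t) ^ p
      = ∫⁻ x in Ioo 0 R, ENNReal.ofReal (x ^ (-(α * p) - 1)) *
          (∫⁻ t in Ioo 0 x, (Iio R).indicator f t) ^ p := by
        refine setLIntegral_congr_fun measurableSet_Ioo fun x hx ↦ ?_
        have : ∀ t ∈ Ioo 0 x, f t = (Iio R).indicator f t := fun t ht ↦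
          (indicator_of_mem (mem_Iio.2 (ht.2.trans hx.2)) f).symm
        simp only [setLIntegral_congr_fun measurableSet_Ioo this]
    _ ≤ ∫⁻ x in Ioi 0, ENNReal.ofReal (x ^ (-(α * p) - 1)) *
          (∫⁻ t in Ioo 0 x, (Iio R).indicator f t) ^ p :=
        lintegral_mono_set Ioo_subset_Ioi_self
    _ ≤ ENNReal.ofReal α⁻¹ ^ p *
          ∫⁻ t in Ioi 0, ENNReal.ofReal (t ^ (p - 1 - α * p)) * (Iio R).indicator f t ^ p :=
        lintegral_Ioi_rpow_mul_rpow_lintegral_Ioo_le hp hα _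
    _ = _ := by
        rw [← Iio_inter_Ioi, ← Measure.restrict_restrict measurableSet_Iio,
          ← lintegral_indicator measurableSet_Iio]
        congr! 3 with t
        by_cases ht : t < R <;> simp [ht, hp₀]

end Hardy

theorem hardy_left_continuous_general {p β γ : ℝ} (R : ℝ) (hp : 1 ≤ p) (hβ : β + 1 / p < 1)
    (hγ : β - 1 ≤ γ) (f : ℝ → ℝ≥0∞) :
    ∫⁻ x in Ioo 0 R, ENNReal.ofReal (x ^ (γ * p)) * (∫⁻ t in Ioo 0 x, f t) ^ p ≤
      ENNReal.ofReal (R ^ (γ - (β - 1)) / (1 - β - 1 / p)) ^ p *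
        ∫⁻ x in Ioo 0 R, ENNReal.ofReal (x ^ (β * p)) * f x ^ p := by
  have hp₀ : 0 < p := by linarith
  set α := 1 - β - 1 / p with hα_def
  have hα : 0 < α := by linarith
  have hβ_eq : β * p = p - 1 - α * p := by rw [hα_def]; field_simp; ring
  set c := ENNReal.ofReal (R ^ (γ - (β - 1)))
  have weight_le {x : ℝ} (hx : x ∈ Ioo 0 R) : ENNReal.ofReal (x ^ (γ * p)) ≤
      c ^ p * ENNReal.ofReal (x ^ (-(α * p) - 1)) := by
    have hx₀ : 0 < x := hx.1
    calc ENNReal.ofReal (x ^ (γ * p))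
        = ENNReal.ofReal (x ^ (γ - (β - 1))) ^ p * ENNReal.ofReal (x ^ (-(α * p) - 1)) := by
          rw [ofReal_rpow_of_pos (by positivity), ← ofReal_mul (by positivity),
            ← Real.rpow_mul hx₀.le, ← Real.rpow_add hx₀]
          congr 2
          linarith
      _ ≤ _ := by
          gcongr
          exact ofReal_le_ofReal (Real.rpow_le_rpow hx₀.le hx.2.le (sub_nonneg.2 hγ))
  have hc : c ^ p ≠ ∞ := rpow_ne_top_of_nonneg hp₀.le ofReal_ne_top
  calc ∫⁻ x in Ioo 0 R, ENNReal.ofReal (x ^ (γ * p)) * (∫⁻ t in Ioo 0 x, f t) ^ p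
      ≤ ∫⁻ x in Ioo 0 R, c ^ p *
          (ENNReal.ofReal (x ^ (-(α * p) - 1)) * (∫⁻ t in Ioo 0 x, f t) ^ p) := by
        refine setLIntegral_mono' measurableSet_Ioo fun x hx ↦ ?_
        rw [← mul_assoc]
        gcongr
        exact weight_le hx
    _ ≤ c ^ p * (ENNReal.ofReal α⁻¹ ^ p *
          ∫⁻ x in Ioo 0 R, ENNReal.ofReal (x ^ (β * p)) * f x ^ p) := by
        rw [lintegral_const_mul' _ _ hc, hβ_eq]
        gcongr
        exact lintegral_Ioo_rpow_mul_rpow_lintegral_Ioo_le hp hα R f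
    _ = _ := by
        rw [← mul_assoc, ← mul_rpow_of_nonneg _ _ hp₀.le,
          ← ofReal_mul' (inv_nonneg.2 hα.le), div_eq_mul_inv]

/-- Hardy's inequality, continuity of the left Hardy operator.
If `1 < p < ∞`, `0 < R < ∞`, `β + 1/p < 1` and `γ ≥ β − 1`, then there is `C > 0`
such that for all nonnegative measurable `f` on `(0,R)`,
`∫₀^R x^{γp} (∫₀^x f)^p dx ≤ C^p ∫₀^R x^{βp} f(x)^p dx`. -/
theorem hardy_left_continuous (p R β γ : ℝ) (hp : 1 < p) (hR : 0 < R)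
    (hβ : β + 1 / p < 1) (hγ : β - 1 ≤ γ) :
    ∃ C : ℝ, 0 < C ∧ ∀ f : ℝ → ℝ≥0∞, Measurable f →
      (∫⁻ x in Ioo (0 : ℝ) R,
          ENNReal.ofReal (x ^ (γ * p)) * (∫⁻ t in Ioo (0 : ℝ) x, f t) ^ p)
        ≤ ENNReal.ofReal C ^ p *
          ∫⁻ x in Ioo (0 : ℝ) R, ENNReal.ofReal (x ^ (β * p)) * f x ^ p :=
  ⟨R ^ (γ - (β - 1)) / (1 - β - 1 / p), div_pos (Real.rpow_pos_of_pos hR _) (by linarith),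
    fun f _ ↦ hardy_left_continuous_general R hp.le hβ hγ f⟩
end

section
/- (Hardy's inequality, continuity of the right Hardy operator.) Let 1 < p < ∞, 0 < R < ∞, and β, γ ∈ ℝ satisfy β + 1/p > 0 and γ ≤ β + 1. Then there exists a constant C > 0 such that for every measurable function f : (0,R) → [0,∞), ∫₀^R x^{βp} (∫_x^R f(t) dt)^p dx ≤ C^p ∫₀^R x^{γp} f(x)^p dx. In other words, the operator f ↦ (x ↦ ∫_x^R f(t)dt) is continuous from L_{p,γ}((0,R)) to L_{p,β}((0,R)). -/
open MeasureTheory Set ENNReal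

/-! With `s = β + 1/p`, apply Jensen's inequality on `(x, ∞)` with respect to the measure
`t ^ (-s - 1) dt`, of total mass `x ^ (-s) / s`, and exchange the order of integration. This
choice of weight gives the sharp constant `1 / s` in the scale-invariant case `γ = β + 1` on
`(0, ∞)`. On `(0, R)` the smaller exponents `γ` cost only the factor `R ^ (β + 1 - γ)`. -/

theorem setLIntegral_Ioi_rpow_of_lt {a c : ℝ} (ha : a < -1) (hc : 0 < c) :
    ∫⁻ t in Ioi c, ENNReal.ofReal (t ^ a) = ENNReal.ofReal (-c ^ (a + 1) / (a + 1)) := by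
  rw [← integral_Ioi_rpow_of_lt ha hc,
    ofReal_integral_eq_lintegral_ofReal (integrableOn_Ioi_rpow_of_lt ha hc)]
  filter_upwards [ae_restrict_mem measurableSet_Ioi] with t ht
  exact Real.rpow_nonneg (hc.trans ht).le a

theorem setLIntegral_Ioo_zero_rpow {a c : ℝ} (ha : -1 < a) (hc : 0 < c) :
    ∫⁻ t in Ioo 0 c, ENNReal.ofReal (t ^ a) = ENNReal.ofReal (c ^ (a + 1) / (a + 1)) := by
  have hint : IntegrableOn (fun t : ℝ ↦ t ^ a) (Ioo 0 c) :=
    (intervalIntegral.integrableOn_Ioo_rpow_iff hc).2 ha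
  have hval : ∫ t in Ioo 0 c, t ^ a = c ^ (a + 1) / (a + 1) := by
    rw [← integral_Ioc_eq_integral_Ioo, ← intervalIntegral.integral_of_le hc.le,
      integral_rpow (Or.inl ha), Real.zero_rpow (by linarith), sub_zero]
  rw [← hval, ofReal_integral_eq_lintegral_ofReal hint]
  filter_upwards [ae_restrict_mem measurableSet_Ioo] with t ht
  exact Real.rpow_nonneg ht.1.le a

theorem rpow_lintegral_le_rpow_lintegral_mul {α : Type*} [MeasurableSpace α] {μ : Measure α}
    {p : ℝ} (hp : 1 ≤ p) {f w : α → ℝ≥0∞} (hf : AEMeasurable f μ) (hw : AEMeasurable w μ)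
    (hw_zero : ∀ᵐ a ∂μ, w a ≠ 0) (hw_top : ∀ᵐ a ∂μ, w a ≠ ∞) :
    (∫⁻ a, f a ∂μ) ^ p ≤ (∫⁻ a, w a ∂μ) ^ (p - 1) * ∫⁻ a, w a ^ (1 - p) * f a ^ p ∂μ := by
  have hp₀ : 0 < p := by linarith
  have hfactor : ∀ᵐ a ∂μ, f a = w a ^ ((p - 1) / p) * (w a ^ (1 - p) * f a ^ p) ^ (1 / p) := by
    have hexp : (p - 1) / p + (1 - p) * (1 / p) = 0 := by ring
    filter_upwards [hw_zero, hw_top] with a h₀ h_top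
    rw [ENNReal.mul_rpow_of_nonneg _ _ (by positivity), ← ENNReal.rpow_mul, ← ENNReal.rpow_mul,
      ← mul_assoc, ← ENNReal.rpow_add _ _ h₀ h_top, hexp, mul_one_div_cancel hp₀.ne',
      ENNReal.rpow_zero, ENNReal.rpow_one, one_mul]
  calc (∫⁻ a, f a ∂μ) ^ p
      = (∫⁻ a, w a ^ ((p - 1) / p) * (w a ^ (1 - p) * f a ^ p) ^ (1 / p) ∂μ) ^ p := by
        rw [lintegral_congr_ae hfactor]
    _ ≤ ((∫⁻ a, w a ∂μ) ^ ((p - 1) / p) *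
          (∫⁻ a, w a ^ (1 - p) * f a ^ p ∂μ) ^ (1 / p)) ^ p := by
        gcongr
        exact ENNReal.lintegral_mul_norm_pow_le hw ((hw.pow_const _).mul (hf.pow_const _))
          (div_nonneg (sub_nonneg.2 hp) hp₀.le) (by positivity) (by field_simp; ring)
    _ = _ := by
        rw [ENNReal.mul_rpow_of_nonneg _ _ hp₀.le, ← ENNReal.rpow_mul, ← ENNReal.rpow_mul,
          div_mul_cancel₀ _ hp₀.ne', one_div_mul_cancel hp₀.ne', ENNReal.rpow_one]

section Swap

variable {α : Type*} [TopologicalSpace α] [LinearOrder α] [OrderClosedTopology α]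
  [SecondCountableTopology α] [MeasurableSpace α] [BorelSpace α] {μ ν : Measure α}
  [SFinite μ] [SFinite ν] {f g : α → ℝ≥0∞}

theorem lintegral_mul_setLIntegral_Ioi_eq (hf : AEMeasurable f μ) (hg : AEMeasurable g ν) :
    ∫⁻ x, f x * ∫⁻ t in Ioi x, g t ∂ν ∂μ = ∫⁻ t, g t * ∫⁻ x in Iio t, f x ∂μ ∂ν := by
  let F (x t : α) : ℝ≥0∞ := {z : α × α | z.1 < z.2}.indicator (fun z ↦ f z.1 * g z.2) (x, t)
  have hF : AEMeasurable (Function.uncurry F) (μ.prod ν) :=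
    (hf.comp_fst.mul hg.comp_snd).indicator (measurableSet_lt measurable_fst measurable_snd)
  have hFx (x : α) : F x = (Ioi x).indicator fun t ↦ f x * g t := by
    ext t; simp [F, indicator]
  have hFt (t : α) : (F · t) = (Iio t).indicator fun x ↦ g t * f x := by
    ext x; simp [F, indicator, mul_comm]
  calc ∫⁻ x, f x * ∫⁻ t in Ioi x, g t ∂ν ∂μ = ∫⁻ x, ∫⁻ t, F x t ∂ν ∂μ := by
        simp only [hFx, lintegral_indicator measurableSet_Ioi,
          lintegral_const_mul'' _ hg.restrict]
    _ = ∫⁻ t, ∫⁻ x, F x t ∂μ ∂ν := lintegral_lintegral_swap hF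
    _ = ∫⁻ t, g t * ∫⁻ x in Iio t, f x ∂μ ∂ν := by
        simp only [hFt, lintegral_indicator measurableSet_Iio,
          lintegral_const_mul'' _ hf.restrict]

theorem setLIntegral_Ioi_mul_setLIntegral_Ioi_eq {c : α}
    (hf : AEMeasurable f (μ.restrict (Ioi c))) (hg : AEMeasurable g (ν.restrict (Ioi c))) :
    ∫⁻ x in Ioi c, f x * ∫⁻ t in Ioi x, g t ∂ν ∂μ =
      ∫⁻ t in Ioi c, g t * ∫⁻ x in Ioo c t, f x ∂μ ∂ν := by
  have hsub (x : α) (hx : x ∈ Ioi c) : Ioi x ∩ Ioi c = Ioi x :=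
    inter_eq_left.2 (Ioi_subset_Ioi (le_of_lt hx))
  calc ∫⁻ x in Ioi c, f x * ∫⁻ t in Ioi x, g t ∂ν ∂μ
      = ∫⁻ x in Ioi c, f x * ∫⁻ t in Ioi x, g t ∂ν.restrict (Ioi c) ∂μ := by
        refine setLIntegral_congr_fun measurableSet_Ioi fun x hx ↦ ?_
        simp only [Measure.restrict_restrict measurableSet_Ioi, hsub x hx]
    _ = ∫⁻ t in Ioi c, g t * ∫⁻ x in Iio t, f x ∂μ.restrict (Ioi c) ∂ν :=
        lintegral_mul_setLIntegral_Ioi_eq hf hg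
    _ = ∫⁻ t in Ioi c, g t * ∫⁻ x in Ioo c t, f x ∂μ ∂ν := by
        simp only [Measure.restrict_restrict measurableSet_Iio, Iio_inter_Ioi]

end Swap

section Hardy

variable {p s : ℝ} {f : ℝ → ℝ≥0∞}

theorem rpow_setLIntegral_Ioi_le (hp : 1 ≤ p) (hs : 0 < s) {x : ℝ} (hx : 0 < x)
    (hf : AEMeasurable f (volume.restrict (Ioi x))) :
    (∫⁻ t in Ioi x, f t) ^ p ≤ ENNReal.ofReal ((x ^ (-s) / s) ^ (p - 1)) *
      ∫⁻ t in Ioi x, ENNReal.ofReal (t ^ ((s + 1) * (p - 1))) * f t ^ p := by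
  have hmass : ∫⁻ t in Ioi x, ENNReal.ofReal (t ^ (-s - 1)) = ENNReal.ofReal (x ^ (-s) / s) := by
    rw [setLIntegral_Ioi_rpow_of_lt (by linarith) hx, sub_add_cancel, neg_div_neg_eq]
  have hpos : ∀ᵐ t ∂volume.restrict (Ioi x), ENNReal.ofReal (t ^ (-s - 1)) ≠ 0 := by
    filter_upwards [ae_restrict_mem measurableSet_Ioi] with t ht
    exact (ENNReal.ofReal_pos.2 (Real.rpow_pos_of_pos (hx.trans ht) _)).ne'
  have hweight : ∫⁻ t in Ioi x, ENNReal.ofReal (t ^ (-s - 1)) ^ (1 - p) * f t ^ p =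
      ∫⁻ t in Ioi x, ENNReal.ofReal (t ^ ((s + 1) * (p - 1))) * f t ^ p := by
    refine setLIntegral_congr_fun measurableSet_Ioi fun t ht ↦ ?_
    have ht₀ : 0 < t := hx.trans ht
    simp only [ENNReal.ofReal_rpow_of_pos (Real.rpow_pos_of_pos ht₀ _), ← Real.rpow_mul ht₀.le]
    ring_nf
  have hjensen := rpow_lintegral_le_rpow_lintegral_mul hp hf (by fun_prop) hpos
    (.of_forall fun _ ↦ ENNReal.ofReal_ne_top)
  rwa [hmass, hweight, ENNReal.ofReal_rpow_of_pos (by positivity)] at hjensen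

theorem rpow_mul_rpow_setLIntegral_Ioi_le (hp : 1 ≤ p) (hs : 0 < s) {x : ℝ} (hx : 0 < x)
    (hf : AEMeasurable f (volume.restrict (Ioi x))) :
    ENNReal.ofReal (x ^ (s * p - 1)) * (∫⁻ t in Ioi x, f t) ^ p ≤
      ENNReal.ofReal (s⁻¹ ^ (p - 1)) * (ENNReal.ofReal (x ^ (s - 1)) *
        ∫⁻ t in Ioi x, ENNReal.ofReal (t ^ ((s + 1) * (p - 1))) * f t ^ p) := by
  have hexp : x ^ (s * p - 1) * (x ^ (-s) / s) ^ (p - 1) = s⁻¹ ^ (p - 1) * x ^ (s - 1) := by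
    rw [div_eq_mul_inv, Real.mul_rpow (by positivity) (by positivity), ← Real.rpow_mul hx.le,
      ← mul_assoc, ← Real.rpow_add hx, mul_comm]
    ring_nf
  refine (mul_le_mul_right (rpow_setLIntegral_Ioi_le hp hs hx hf) _).trans_eq ?_
  rw [← mul_assoc, ← mul_assoc, ← ENNReal.ofReal_mul (by positivity), hexp,
    ENNReal.ofReal_mul (by positivity)]

theorem hardy_inequality_Ioi (hp : 1 ≤ p) (hs : 0 < s)
    (hf : AEMeasurable f (volume.restrict (Ioi 0))) :
    ∫⁻ x in Ioi 0, ENNReal.ofReal (x ^ (s * p - 1)) * (∫⁻ t in Ioi x, f t) ^ p ≤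
      ENNReal.ofReal s⁻¹ ^ p *
        ∫⁻ x in Ioi 0, ENNReal.ofReal (x ^ ((s + 1) * p - 1)) * f x ^ p := by
  let g (t : ℝ) : ℝ≥0∞ := ENNReal.ofReal (t ^ ((s + 1) * (p - 1))) * f t ^ p
  have hg : AEMeasurable g (volume.restrict (Ioi 0)) := by fun_prop
  have houter {t : ℝ} (ht : 0 < t) : g t * ∫⁻ x in Ioo 0 t, ENNReal.ofReal (x ^ (s - 1)) =
      ENNReal.ofReal s⁻¹ * (ENNReal.ofReal (t ^ ((s + 1) * p - 1)) * f t ^ p) := by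
    have hexp : t ^ ((s + 1) * (p - 1)) * (t ^ s / s) = s⁻¹ * t ^ ((s + 1) * p - 1) := by
      rw [div_eq_mul_inv, ← mul_assoc, ← Real.rpow_add ht, mul_comm]
      ring_nf
    rw [setLIntegral_Ioo_zero_rpow (by linarith) ht, sub_add_cancel, mul_right_comm,
      ← ENNReal.ofReal_mul (by positivity), hexp, ENNReal.ofReal_mul (by positivity), mul_assoc]
  have hconst : ENNReal.ofReal (s⁻¹ ^ (p - 1)) * ENNReal.ofReal s⁻¹ = ENNReal.ofReal s⁻¹ ^ p := by
    rw [← ENNReal.ofReal_mul (by positivity), ← Real.rpow_add_one (inv_pos.2 hs).ne',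
      sub_add_cancel, ENNReal.ofReal_rpow_of_pos (inv_pos.2 hs)]
  calc _ ≤ ∫⁻ x in Ioi 0, ENNReal.ofReal (s⁻¹ ^ (p - 1)) *
          (ENNReal.ofReal (x ^ (s - 1)) * ∫⁻ t in Ioi x, g t) :=
        setLIntegral_mono' measurableSet_Ioi fun _ hx ↦
          rpow_mul_rpow_setLIntegral_Ioi_le hp hs hx (hf.mono_set (Ioi_subset_Ioi (le_of_lt hx)))
    _ = ENNReal.ofReal (s⁻¹ ^ (p - 1)) *
          ∫⁻ t in Ioi 0, g t * ∫⁻ x in Ioo 0 t, ENNReal.ofReal (x ^ (s - 1)) := by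
        rw [lintegral_const_mul' _ _ ENNReal.ofReal_ne_top,
          setLIntegral_Ioi_mul_setLIntegral_Ioi_eq (by fun_prop) hg]
    _ = _ := by
        rw [setLIntegral_congr_fun measurableSet_Ioi fun _ ht ↦ houter ht,
          lintegral_const_mul' _ _ ENNReal.ofReal_ne_top, ← mul_assoc, hconst]

theorem hardy_inequality_Ioo {R : ℝ} (hp : 1 ≤ p) (hs : 0 < s)
    (hf : AEMeasurable f (volume.restrict (Ioo 0 R))) :
    ∫⁻ x in Ioo 0 R, ENNReal.ofReal (x ^ (s * p - 1)) * (∫⁻ t in Ioo x R, f t) ^ p ≤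
      ENNReal.ofReal s⁻¹ ^ p *
        ∫⁻ x in Ioo 0 R, ENNReal.ofReal (x ^ ((s + 1) * p - 1)) * f x ^ p := by
  let g : ℝ → ℝ≥0∞ := (Ioo 0 R).indicator f
  have hg : AEMeasurable g := (aemeasurable_indicator_iff measurableSet_Ioo).2 hf
  have hinner {x : ℝ} (hx : 0 < x) : ∫⁻ t in Ioi x, g t = ∫⁻ t in Ioo x R, f t := by
    rw [setLIntegral_indicator measurableSet_Ioo, Ioo_inter_Ioi, max_eq_right hx.le]
  have hnorm : ∫⁻ x in Ioi 0, ENNReal.ofReal (x ^ ((s + 1) * p - 1)) * g x ^ p =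
      ∫⁻ x in Ioo 0 R, ENNReal.ofReal (x ^ ((s + 1) * p - 1)) * f x ^ p := by
    have hind : (fun x : ℝ ↦ ENNReal.ofReal (x ^ ((s + 1) * p - 1)) * g x ^ p) =
        (Ioo 0 R).indicator fun x ↦ ENNReal.ofReal (x ^ ((s + 1) * p - 1)) * f x ^ p := by
      ext x
      by_cases hx : x ∈ Ioo 0 R <;> simp [g, hx, zero_lt_one.trans_le hp]
    rw [hind, setLIntegral_indicator measurableSet_Ioo, inter_eq_left.2 Ioo_subset_Ioi_self]
  calc _ = ∫⁻ x in Ioo 0 R, ENNReal.ofReal (x ^ (s * p - 1)) * (∫⁻ t in Ioi x, g t) ^ p :=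
        setLIntegral_congr_fun measurableSet_Ioo fun x hx ↦ by simp only [hinner hx.1]
    _ ≤ ∫⁻ x in Ioi 0, ENNReal.ofReal (x ^ (s * p - 1)) * (∫⁻ t in Ioi x, g t) ^ p :=
        lintegral_mono_set Ioo_subset_Ioi_self
    _ ≤ _ := (hardy_inequality_Ioi hp hs hg.restrict).trans_eq (by rw [hnorm])

end Hardy

theorem setLIntegral_Ioo_rpow_mul_le {μ : Measure ℝ} {R a b : ℝ} (hab : b ≤ a)
    (f : ℝ → ℝ≥0∞) :
    ∫⁻ x in Ioo 0 R, ENNReal.ofReal (x ^ a) * f x ∂μ ≤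
      ENNReal.ofReal (R ^ (a - b)) * ∫⁻ x in Ioo 0 R, ENNReal.ofReal (x ^ b) * f x ∂μ := by
  rw [← lintegral_const_mul' _ _ ENNReal.ofReal_ne_top]
  refine setLIntegral_mono' measurableSet_Ioo fun x ⟨hx₀, hxR⟩ ↦ ?_
  have hR : 0 < R := hx₀.trans hxR
  rw [← mul_assoc, ← ENNReal.ofReal_mul (by positivity)]
  gcongr
  calc x ^ a = x ^ (a - b) * x ^ b := by rw [← Real.rpow_add hx₀, sub_add_cancel]
    _ ≤ R ^ (a - b) * x ^ b := by gcongr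

theorem hardy_right_continuous_general {p R β γ : ℝ} (hp : 1 ≤ p) (hR : 0 < R)
    (hβ : 0 < β + 1 / p) (hγ : γ ≤ β + 1) {f : ℝ → ℝ≥0∞}
    (hf : AEMeasurable f (volume.restrict (Ioo 0 R))) :
    ∫⁻ x in Ioo 0 R, ENNReal.ofReal (x ^ (β * p)) * (∫⁻ t in Ioo x R, f t) ^ p ≤
      ENNReal.ofReal (R ^ (β + 1 - γ) / (β + 1 / p)) ^ p *
        ∫⁻ x in Ioo 0 R, ENNReal.ofReal (x ^ (γ * p)) * f x ^ p := by
  have hp₀ : 0 < p := zero_lt_one.trans_le hp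
  have hβp : (β + 1 / p) * p - 1 = β * p := by field_simp; ring
  have hβp' : (β + 1 / p + 1) * p - 1 = (β + 1) * p := by field_simp; ring
  have hconst : ENNReal.ofReal (β + 1 / p)⁻¹ ^ p * ENNReal.ofReal (R ^ ((β + 1) * p - γ * p)) =
      ENNReal.ofReal (R ^ (β + 1 - γ) / (β + 1 / p)) ^ p := by
    rw [← sub_mul, Real.rpow_mul hR.le, ← ENNReal.ofReal_rpow_of_pos (by positivity),
      ← ENNReal.mul_rpow_of_nonneg _ _ hp₀.le, ← ENNReal.ofReal_mul (by positivity),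
      inv_mul_eq_div]
  have hsharp := hardy_inequality_Ioo hp hβ hf
  rw [hβp, hβp'] at hsharp
  calc _ ≤ ENNReal.ofReal (β + 1 / p)⁻¹ ^ p *
          ∫⁻ x in Ioo 0 R, ENNReal.ofReal (x ^ ((β + 1) * p)) * f x ^ p := hsharp
    _ ≤ ENNReal.ofReal (β + 1 / p)⁻¹ ^ p * (ENNReal.ofReal (R ^ ((β + 1) * p - γ * p)) *
          ∫⁻ x in Ioo 0 R, ENNReal.ofReal (x ^ (γ * p)) * f x ^ p) := by
        gcongr
        exact setLIntegral_Ioo_rpow_mul_le (by gcongr) _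
    _ = _ := by rw [← mul_assoc, hconst]

/-- Hardy's inequality, continuity of the right Hardy operator.
If `1 < p < ∞`, `0 < R < ∞`, `β + 1/p > 0` and `γ ≤ β + 1`, then there is `C > 0`
such that for all nonnegative measurable `f` on `(0,R)`,
`∫₀^R x^{βp} (∫ₓ^R f)^p dx ≤ C^p ∫₀^R x^{γp} f(x)^p dx`. -/
theorem hardy_right_continuous (p R β γ : ℝ) (hp : 1 < p) (hR : 0 < R)
    (hβ : 0 < β + 1 / p) (hγ : γ ≤ β + 1) :
    ∃ C : ℝ, 0 < C ∧ ∀ f : ℝ → ℝ≥0∞, Measurable f →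
      (∫⁻ x in Ioo (0 : ℝ) R,
          ENNReal.ofReal (x ^ (β * p)) * (∫⁻ t in Ioo x R, f t) ^ p)
        ≤ ENNReal.ofReal C ^ p *
          ∫⁻ x in Ioo (0 : ℝ) R, ENNReal.ofReal (x ^ (γ * p)) * f x ^ p := by
  exact ⟨R ^ (β + 1 - γ) / (β + 1 / p), by positivity, fun f hf ↦
    hardy_right_continuous_general hp.le hR hβ hγ hf.aemeasurable⟩
end

section
/- (Hardy's inequality, compactness of the right Hardy operator.) Let 1 < p < ∞, 0 < R < ∞, and β, γ ∈ ℝ satisfy β + 1/p > 0 and γ < β + 1. Then there exists a continuous linear operator T from L^p of the measure x^{γp}dx on (0,R) to L^p of the measure x^{βp}dx on (0,R) such that for every f, (Tf)(x) = ∫_x^R f(t) dt for almost every x ∈ (0,R), and T is a compact operator. -/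
open MeasureTheory Set ENNReal

/-- The weighted measure `x^{βp} dx` on `(0,R)`. -/
noncomputable def hardyWeight (R β p : ℝ) : Measure ℝ :=
  (volume.restrict (Ioo (0 : ℝ) R)).withDensity
    (fun x => ENNReal.ofReal (x ^ (β * p)))

/-!
Relative to the measure `t^{γp} dt`, the operator `f ↦ ∫ₓ^R f` has the kernel
`K x t = 1_{t > x} t^{-γp}`. By the Hille–Tamarkin theorem it is compact as soon as
`x ↦ ‖K x‖_{L^{p'}}` lies in `L^p(x^{βp} dx)`: such a kernel is an `L^p` function with values in
`L^{p'} = (L^p)*`, hence a limit of simple functions, and a simple function gives an operator of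
finite rank. For any `δ > max (γ, 1/p')` the norm of `K x` is `O(x^{1/p' - δ})`, whose `p`-th power
is integrable against `x^{βp}` exactly when `δ < β + 1`; the hypotheses `γ < β + 1` and
`1/p' < β + 1`, i.e. `β + 1/p > 0`, leave room for such a `δ`.
-/

section BochnerKernel

variable {𝕜 E F α : Type*} [NontriviallyNormedField 𝕜] [NormedAddCommGroup E] [NormedSpace 𝕜 E]
  [NormedAddCommGroup F] [NormedSpace 𝕜 F] [MeasurableSpace α]

/-- The operator `E → L^p(μ; F)` sending `f` to `x ↦ k x f`, as a continuous linear function of its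
operator-valued kernel `k`. The kernel is required to be in the Bochner space for the operator
norm, which is what makes the operator compact when `F` is finite-dimensional. -/
noncomputable def bochnerKernelOperator (μ : Measure α) (p : ℝ≥0∞) [Fact (1 ≤ p)] :
    Lp (E →L[𝕜] F) p μ →L[𝕜] E →L[𝕜] Lp F p μ :=
  ((ContinuousLinearMap.id 𝕜 (E →L[𝕜] F)).flip.compLpL₂ p μ).flip

variable {μ : Measure α} {p : ℝ≥0∞} [Fact (1 ≤ p)]

theorem coeFn_bochnerKernelOperator (k : Lp (E →L[𝕜] F) p μ) (f : E) :
    bochnerKernelOperator μ p k f =ᵐ[μ] fun x => k x f :=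
  ((ContinuousLinearMap.id 𝕜 (E →L[𝕜] F)).flip f).coeFn_compLp k

theorem bochnerKernelOperator_indicatorConstLp {s : Set α} (hs : MeasurableSet s) (hμs : μ s ≠ ∞)
    (c : E →L[𝕜] F) (f : E) :
    bochnerKernelOperator μ p (indicatorConstLp p hs hμs c) f =
      indicatorConstLp p hs hμs (c f) := by
  apply Lp.ext
  filter_upwards [coeFn_bochnerKernelOperator (indicatorConstLp p hs hμs c) f,
    indicatorConstLp_coeFn (p := p) (hs := hs) (hμs := hμs) (c := c),
    indicatorConstLp_coeFn (p := p) (hs := hs) (hμs := hμs) (c := c f)] with x hop hc hcf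
  rw [hop, hc, hcf]
  by_cases hx : x ∈ s <;> simp [hx]

theorem isCompactOperator_bochnerKernelOperator [ProperSpace F] (hp : p ≠ ∞)
    (k : Lp (E →L[𝕜] F) p μ) : IsCompactOperator (bochnerKernelOperator μ p k) := by
  refine Lp.induction hp (motive := fun k => IsCompactOperator (bochnerKernelOperator μ p k))
    (fun c s hs hμs => ?_) (fun f g hf hg _ hTf hTg => ?_)
    (isClosed_setOfPred_isCompactOperator.preimage (bochnerKernelOperator μ p).continuous) k
  · have hfactor : ⇑(bochnerKernelOperator μ p (indicatorConstLp p hs hμs.ne c)) =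
        bochnerKernelOperator μ p
          (indicatorConstLp p hs hμs.ne (ContinuousLinearMap.id 𝕜 F)) ∘ c := by
      ext1 f
      simp only [Function.comp_apply, bochnerKernelOperator_indicatorConstLp,
        ContinuousLinearMap.id_apply]
    rw [Lp.simpleFunc.coe_indicatorConst, hfactor]
    exact (isCompactOperator_of_locallyCompactSpace_dom c).clm_comp _
  · rw [map_add]
    exact hTf.add hTg

end BochnerKernel

section Measurability

open TopologicalSpace

theorem measurable_of_measurable_edist {α X : Type*} [MeasurableSpace α] [PseudoEMetricSpace X]
    [SecondCountableTopology X] [MeasurableSpace X] [BorelSpace X] {f : α → X}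
    (hf : ∀ y, Measurable fun x => edist (f x) y) : Measurable f := by
  have hbasis : IsTopologicalBasis {s : Set X | ∃ y r, s = Metric.eball y r} := by
    refine isTopologicalBasis_of_isOpen_of_nhds ?_ fun y U hy hU => ?_
    · rintro _ ⟨y, r, rfl⟩
      exact Metric.isOpen_eball
    · obtain ⟨r, hr, hrU⟩ := EMetric.isOpen_iff.1 hU y hy
      exact ⟨_, ⟨y, r, rfl⟩, Metric.mem_eball_self hr, hrU⟩
  borelize X
  rw [hbasis.borel_eq_generateFrom]
  refine measurable_generateFrom ?_
  rintro _ ⟨y, r, rfl⟩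
  exact hf y measurableSet_Iio

variable {α β E : Type*} [MeasurableSpace α] [MeasurableSpace β] [NormedAddCommGroup E]
  [MeasurableSpace E] {ν : Measure β} [SFinite ν] {q : ℝ≥0∞}

theorem measurable_eLpNorm_section [OpensMeasurableSpace E] (hq : q ≠ ∞) {K : α → β → E}
    (hK : Measurable (Function.uncurry K)) : Measurable fun x => eLpNorm (K x) q ν := by
  rcases eq_or_ne q 0 with rfl | hq0
  · simp only [eLpNorm_exponent_zero, measurable_const]
  · simp only [eLpNorm_eq_lintegral_rpow_enorm_toReal hq0 hq]
    exact (hK.enorm.pow_const q.toReal).lintegral_prod_right'.pow_const _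

theorem exists_stronglyMeasurable_Lp_section [BorelSpace E] [SecondCountableTopology E]
    [IsSeparable ν] [Fact (1 ≤ q)] (hq : q ≠ ∞) {K : α → β → E}
    (hK : Measurable (Function.uncurry K)) :
    ∃ k : α → Lp E q ν, StronglyMeasurable k ∧ ∀ x, MemLp (K x) q ν → k x =ᵐ[ν] K x := by
  classical
  have : Fact (q ≠ ∞) := ⟨hq⟩
  borelize ↥(Lp E q ν)
  refine ⟨fun x => if h : MemLp (K x) q ν then h.toLp else 0, ?_, fun x hx => ?_⟩
  · -- `L^q(ν)` is separable, so it is enough that the distances to fixed elements are measurable,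
    -- and these are partial integrals.
    refine (measurable_of_measurable_edist fun g => ?_).stronglyMeasurable
    have hmem : ∀ x, MemLp (K x) q ν ↔ eLpNorm (K x) q ν < ∞ := fun x =>
      and_iff_right (hK.of_uncurry_left.aestronglyMeasurable)
    have hedist : ∀ x, edist (if h : MemLp (K x) q ν then h.toLp else 0) g =
        if eLpNorm (K x) q ν < ∞ then eLpNorm (K x - ⇑g) q ν else edist 0 g := fun x => by
      by_cases hx : MemLp (K x) q ν
      · rw [dif_pos hx, if_pos hx.2, Lp.edist_def]
        exact eLpNorm_congr_ae (hx.coeFn_toLp.sub (.refl _ _))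
      · rw [dif_neg hx, if_neg (mt (hmem x).2 hx)]
    simp only [hedist]
    refine .ite (measurable_eLpNorm_section hq hK measurableSet_Iio)
      (measurable_eLpNorm_section hq (K := fun x => K x - ⇑g) ?_) measurable_const
    exact hK.sub ((Lp.stronglyMeasurable g).measurable.comp measurable_snd)
  · simp only [dif_pos hx]
    exact hx.coeFn_toLp

theorem ae_lt_top_of_eLpNorm_ne_top {μ : Measure α} {p : ℝ≥0∞}
    {f : α → ℝ≥0∞} (hf : Measurable f) (hp : p ≠ 0) (hfp : eLpNorm f p μ ≠ ∞) :
    ∀ᵐ x ∂μ, f x < ∞ := by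
  rcases eq_or_ne p ∞ with rfl | hp_top
  · rw [eLpNorm_exponent_top] at hfp
    filter_upwards [enorm_ae_le_eLpNormEssSup f μ] with x hx
    exact hx.trans_lt hfp.lt_top
  · have hint := (eLpNorm_lt_top_iff_lintegral_rpow_enorm_lt_top hp hp_top).1 hfp.lt_top
    filter_upwards [ae_lt_top (hf.pow_const _) hint.ne] with x hx
    exact (ENNReal.rpow_lt_top_iff_of_pos (ENNReal.toReal_pos hp hp_top)).1 hx

end Measurability

section HilleTamarkin

variable {𝕜 F α β : Type*} [RCLike 𝕜] [NormedAddCommGroup F] [NormedSpace 𝕜 F] [NormedSpace ℝ F]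
  [SMulCommClass ℝ 𝕜 F] [ProperSpace F] [MeasurableSpace α] [MeasurableSpace β]
  {μ : Measure α} {ν : Measure β} [SFinite ν] [IsSeparable ν]
  {p q r : ℝ≥0∞} [Fact (1 ≤ p)] [Fact (1 ≤ r)] [HolderConjugate q p]

variable (F p) in
/-- The **Hille–Tamarkin theorem**. -/
theorem exists_isCompactOperator_integral_kernel_smul (hq : q ≠ ∞) (hr : r ≠ ∞)
    {K : α → β → 𝕜} (hK : Measurable (Function.uncurry K))
    (hKr : eLpNorm (fun x => eLpNorm (K x) q ν) r μ ≠ ∞) :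
    ∃ T : Lp F p ν →L[𝕜] Lp F r μ, IsCompactOperator T ∧
      ∀ f, T f =ᵐ[μ] fun x => ∫ t, K x t • f t ∂ν := by
  have : Fact (1 ≤ q) := ⟨HolderConjugate.one_le q p⟩
  obtain ⟨k, hk, hkK⟩ := exists_stronglyMeasurable_Lp_section (ν := ν) hq hK
  have hr0 : r ≠ 0 := (zero_lt_one.trans_le Fact.out).ne'
  have hsec : ∀ᵐ x ∂μ, MemLp (K x) q ν := by
    filter_upwards [ae_lt_top_of_eLpNorm_ne_top (measurable_eLpNorm_section hq hK) hr0 hKr]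
      with x hx using ⟨hK.of_uncurry_left.aestronglyMeasurable, hx⟩
  have hk_mem : MemLp k r μ := by
    refine ⟨hk.aestronglyMeasurable, ?_⟩
    refine lt_of_eq_of_lt (eLpNorm_congr_enorm_ae ?_) hKr.lt_top
    filter_upwards [hsec] with x hx
    rw [Lp.enorm_def, eLpNorm_congr_ae (hkK x hx), enorm_eq_self]
  let J := (ContinuousLinearMap.lsmul 𝕜 𝕜 (E := F)).lpPairing ν q p
  refine ⟨bochnerKernelOperator μ r (J.compLp (hk_mem.toLp k)),
    isCompactOperator_bochnerKernelOperator hr _, fun f => ?_⟩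
  filter_upwards [coeFn_bochnerKernelOperator (J.compLp (hk_mem.toLp k)) f,
    J.coeFn_compLp (hk_mem.toLp k), hk_mem.coeFn_toLp, hsec] with x hT hJ hkx hx
  rw [hT, hJ, hkx, ContinuousLinearMap.lpPairing_eq_integral]
  refine integral_congr_ae ?_
  filter_upwards [hkK x hx] with t ht
  rw [ht, ContinuousLinearMap.lsmul_apply]

end HilleTamarkin

section HardyWeight

variable {R β p : ℝ}

instance sFinite_hardyWeight : SFinite (hardyWeight R β p) := by
  unfold hardyWeight
  infer_instance

theorem ae_hardyWeight_iff {P : ℝ → Prop} :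
    (∀ᵐ x ∂hardyWeight R β p, P x) ↔ ∀ᵐ x ∂volume.restrict (Ioo 0 R), P x := by
  rw [hardyWeight, ae_withDensity_iff (by fun_prop)]
  refine Filter.eventually_congr ?_
  filter_upwards [ae_restrict_mem measurableSet_Ioo] with x hx
  have hx_pow : ENNReal.ofReal (x ^ (β * p)) ≠ 0 := by
    simpa using Real.rpow_pos_of_pos hx.1 (β * p)
  simp only [ne_eq, hx_pow, not_false_eq_true, forall_const]

theorem lintegral_hardyWeight (g : ℝ → ℝ≥0∞) :
    ∫⁻ x, g x ∂hardyWeight R β p = ∫⁻ x in Ioo 0 R, ENNReal.ofReal (x ^ (β * p)) * g x := by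
  rw [hardyWeight, lintegral_withDensity_eq_lintegral_mul_non_measurable _ (by fun_prop) (by simp)]
  rfl

theorem integral_hardyWeight {E : Type*} [NormedAddCommGroup E] [NormedSpace ℝ E] (g : ℝ → E) :
    ∫ x, g x ∂hardyWeight R β p = ∫ x in Ioo 0 R, x ^ (β * p) • g x := by
  rw [hardyWeight, integral_withDensity_eq_integral_toReal_smul (by fun_prop) (by simp)]
  refine setIntegral_congr_fun measurableSet_Ioo fun x hx => ?_
  rw [ENNReal.toReal_ofReal (Real.rpow_nonneg hx.1.le _)]

theorem memLp_rpow_hardyWeight {a : ℝ} (hp : 0 < p) (hR : 0 < R) (ha : 0 < β + a + 1 / p) :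
    MemLp (fun x => x ^ a) (ENNReal.ofReal p) (hardyWeight R β p) := by
  have hexp : -1 < β * p + a * p := by
    have hmul : 0 < (β + a + 1 / p) * p := mul_pos ha hp
    rw [add_mul, one_div_mul_cancel hp.ne'] at hmul
    linarith
  refine ⟨by fun_prop, ?_⟩
  rw [eLpNorm_lt_top_iff_lintegral_rpow_enorm_lt_top (by simpa using hp) (by simp),
    ENNReal.toReal_ofReal hp.le, lintegral_hardyWeight]
  refine lt_of_eq_of_lt (setLIntegral_congr_fun measurableSet_Ioo fun x hx => ?_)
    ((intervalIntegral.integrableOn_Ioo_rpow_iff hR).2 hexp).lintegral_lt_top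
  have hx0 : 0 < x := hx.1
  rw [Real.enorm_of_nonneg (by positivity), ENNReal.ofReal_rpow_of_nonneg (by positivity) hp.le,
    ← ENNReal.ofReal_mul (by positivity), ← Real.rpow_mul hx0.le, ← Real.rpow_add hx0]

end HardyWeight

section HardyKernel

/-- The kernel of `f ↦ ∫ₓ^R f` with respect to the measure `t^{γp} dt` rather than Lebesgue
measure, so that Hölder duality is taken within a single measure space. -/
noncomputable def hardyKernel (γ p x : ℝ) : ℝ → ℝ :=
  (Ioi x).indicator fun t => t ^ (-(γ * p))

variable {γ p q R x : ℝ}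

theorem measurable_uncurry_hardyKernel : Measurable (Function.uncurry (hardyKernel γ p)) := by
  have hker : Function.uncurry (hardyKernel γ p) =
      {z : ℝ × ℝ | z.1 < z.2}.indicator fun z => z.2 ^ (-(γ * p)) := rfl
  rw [hker]
  exact Measurable.indicator (by fun_prop) (measurableSet_lt measurable_fst measurable_snd)

theorem integral_hardyKernel_smul {F : Type*} [NormedAddCommGroup F] [NormedSpace ℝ F]
    (hx : 0 ≤ x) (f : ℝ → F) :
    ∫ t, hardyKernel γ p x t • f t ∂hardyWeight R γ p = ∫ t in Ioo x R, f t := by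
  have hinter : Ioo 0 R ∩ Ioi x = Ioo x R := by rw [Ioo_inter_Ioi, max_eq_right hx]
  rw [integral_hardyWeight, ← hinter, ← setIntegral_indicator measurableSet_Ioi]
  refine setIntegral_congr_fun measurableSet_Ioo fun t ht => ?_
  by_cases hxt : t ∈ Ioi x
  · simp only [hardyKernel, indicator_of_mem hxt]
    rw [smul_smul, ← Real.rpow_add ht.1, add_neg_cancel, Real.rpow_zero, one_smul]
  · simp only [hardyKernel, indicator_of_notMem hxt, zero_smul, smul_zero]

theorem lintegral_enorm_hardyKernel_rpow (hpq : p.HolderConjugate q) (hx : 0 ≤ x) :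
    ∫⁻ t, ‖hardyKernel γ p x t‖ₑ ^ q ∂hardyWeight R γ p =
      ∫⁻ t in Ioo x R, ENNReal.ofReal (t ^ (-(γ * q))) := by
  have hinter : Ioi x ∩ Ioo 0 R = Ioo x R := by rw [inter_comm, Ioo_inter_Ioi, max_eq_right hx]
  have hexp : γ * p + -(γ * p) * q = -(γ * q) := by
    linear_combination -γ * hpq.mul_eq_add
  rw [lintegral_hardyWeight, ← hinter, ← setLIntegral_indicator measurableSet_Ioi]
  refine setLIntegral_congr_fun measurableSet_Ioo fun t ht => ?_
  have ht0 : 0 < t := ht.1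
  by_cases hxt : t ∈ Ioi x
  · simp only [hardyKernel, indicator_of_mem hxt]
    rw [Real.enorm_of_nonneg (by positivity),
      ENNReal.ofReal_rpow_of_nonneg (by positivity) hpq.symm.nonneg,
      ← ENNReal.ofReal_mul (by positivity), ← Real.rpow_mul ht0.le, ← Real.rpow_add ht0, hexp]
  · simp only [hardyKernel, indicator_of_notMem hxt, enorm_zero,
      ENNReal.zero_rpow_of_pos hpq.symm.pos, mul_zero]

theorem setLIntegral_Ioi_rpow {s : ℝ} (hs : 1 < s) (hx : 0 < x) :
    ∫⁻ t in Ioi x, ENNReal.ofReal (t ^ (-s)) = ENNReal.ofReal (x ^ (1 - s) / (s - 1)) := by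
  rw [← ofReal_integral_eq_lintegral_ofReal (integrableOn_Ioi_rpow_of_lt (by linarith) hx),
    integral_Ioi_rpow_of_lt (by linarith) hx]
  · rw [show -s + 1 = -(s - 1) by ring, show 1 - s = -(s - 1) by ring, neg_div_neg_eq]
  · filter_upwards [ae_restrict_mem measurableSet_Ioi] with t ht
    exact Real.rpow_nonneg (hx.trans ht).le _

theorem setLIntegral_Ioo_rpow_le {r s : ℝ} (hs : 1 < s) (hrs : r ≤ s) (hR : 0 ≤ R) (hx : 0 < x) :
    ∫⁻ t in Ioo x R, ENNReal.ofReal (t ^ (-r)) ≤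
      ENNReal.ofReal (R ^ (s - r) * (x ^ (1 - s) / (s - 1))) := by
  have hpow : ∀ t ∈ Ioo x R, t ^ (-r) ≤ R ^ (s - r) * t ^ (-s) := fun t ht => by
    have ht0 : 0 < t := hx.trans ht.1
    rw [show -r = (s - r) + -s by ring, Real.rpow_add ht0]
    have : 0 ≤ s - r := sub_nonneg.2 hrs
    gcongr
    exact ht.2.le
  calc ∫⁻ t in Ioo x R, ENNReal.ofReal (t ^ (-r))
      ≤ ∫⁻ t in Ioo x R, ENNReal.ofReal (R ^ (s - r)) * ENNReal.ofReal (t ^ (-s)) := by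
        refine setLIntegral_mono (by fun_prop) fun t ht => ?_
        rw [← ENNReal.ofReal_mul (by positivity)]
        exact ENNReal.ofReal_le_ofReal (hpow t ht)
    _ ≤ ∫⁻ t in Ioi x, ENNReal.ofReal (R ^ (s - r)) * ENNReal.ofReal (t ^ (-s)) :=
        lintegral_mono_set Ioo_subset_Ioi_self
    _ = ENNReal.ofReal (R ^ (s - r) * (x ^ (1 - s) / (s - 1))) := by
        rw [lintegral_const_mul _ (by fun_prop), setLIntegral_Ioi_rpow hs hx,
          ← ENNReal.ofReal_mul (by positivity)]

theorem eLpNorm_hardyKernel_le {δ : ℝ} (hpq : p.HolderConjugate q) (hγδ : γ ≤ δ) (hδ : 1 / q < δ)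
    (hR : 0 ≤ R) (hx : 0 < x) :
    eLpNorm (hardyKernel γ p x) (ENNReal.ofReal q) (hardyWeight R γ p) ≤
      ENNReal.ofReal ((R ^ (δ * q - γ * q) / (δ * q - 1)) ^ (1 / q) * x ^ (1 / q - δ)) := by
  have hq : 0 < q := hpq.symm.pos
  have hs : 1 < δ * q := (div_lt_iff₀ hq).1 hδ
  have : 0 < δ * q - 1 := sub_pos.2 hs
  have hsplit : (R ^ (δ * q - γ * q) * (x ^ (1 - δ * q) / (δ * q - 1))) ^ (1 / q) =
      (R ^ (δ * q - γ * q) / (δ * q - 1)) ^ (1 / q) * x ^ (1 / q - δ) := by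
    rw [mul_div_assoc', mul_div_right_comm, Real.mul_rpow (by positivity) (by positivity),
      ← Real.rpow_mul hx.le]
    congr 2
    field_simp
  rw [eLpNorm_eq_lintegral_rpow_enorm_toReal (by simpa using hq) (by simp),
    ENNReal.toReal_ofReal hq.le, lintegral_enorm_hardyKernel_rpow hpq hx.le, ← hsplit,
    ← ENNReal.ofReal_rpow_of_nonneg (by positivity) (by positivity)]
  gcongr
  exact setLIntegral_Ioo_rpow_le hs (by gcongr) hR hx

theorem eLpNorm_eLpNorm_hardyKernel_ne_top {β : ℝ} (hpq : p.HolderConjugate q) (hR : 0 < R)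
    (hβ : 0 < β + 1 / p) (hγ : γ < β + 1) :
    eLpNorm (fun x => eLpNorm (hardyKernel γ p x) (ENNReal.ofReal q) (hardyWeight R γ p))
      (ENNReal.ofReal p) (hardyWeight R β p) ≠ ∞ := by
  have hinv : 1 / p + 1 / q = 1 := by simpa only [one_div] using hpq.inv_add_inv_eq_one
  obtain ⟨δ, hmax, hδβ⟩ : ∃ δ, max γ (1 / q) < δ ∧ δ < β + 1 :=
    exists_between (max_lt hγ (by linarith))
  obtain ⟨hγδ, hqδ⟩ := max_lt_iff.1 hmax
  have hmem : MemLp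
      (fun x => (R ^ (δ * q - γ * q) / (δ * q - 1)) ^ (1 / q) * x ^ (1 / q - δ))
      (ENNReal.ofReal p) (hardyWeight R β p) :=
    (memLp_rpow_hardyWeight hpq.pos hR (by linarith)).const_mul _
  refine ((eLpNorm_mono_enorm_ae ?_).trans_lt hmem.2).ne
  rw [ae_hardyWeight_iff]
  filter_upwards [ae_restrict_mem measurableSet_Ioo] with x hx
  rw [enorm_eq_self]
  exact (eLpNorm_hardyKernel_le hpq hγδ.le hqδ hR.le hx.1).trans (Real.ofReal_le_enorm _)

end HardyKernel

theorem hardy_right_compact_general {F : Type*} [NormedAddCommGroup F] [NormedSpace ℝ F]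
    [FiniteDimensional ℝ F] (p R β γ : ℝ) (hp : 1 < p) (hR : 0 < R)
    (hβ : 0 < β + 1 / p) (hγ : γ < β + 1)
    [Fact (1 ≤ ENNReal.ofReal p)] :
    ∃ T : Lp F (ENNReal.ofReal p) (hardyWeight R γ p) →L[ℝ]
        Lp F (ENNReal.ofReal p) (hardyWeight R β p),
      IsCompactOperator T ∧
      ∀ f : Lp F (ENNReal.ofReal p) (hardyWeight R γ p),
        ∀ᵐ x ∂(volume.restrict (Ioo (0 : ℝ) R)),
          (T f : ℝ → F) x = ∫ t in Ioo x R, (f : ℝ → F) t := by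
  have : ProperSpace F := FiniteDimensional.proper_real F
  have hpq : p.HolderConjugate p.conjExponent := .conjExponent hp
  have := hpq.symm.ennrealOfReal
  obtain ⟨T, hT, hTf⟩ := exists_isCompactOperator_integral_kernel_smul
    F (ENNReal.ofReal p) ofReal_ne_top ofReal_ne_top measurable_uncurry_hardyKernel
    (eLpNorm_eLpNorm_hardyKernel_ne_top hpq hR hβ hγ)
  refine ⟨T, hT, fun f => ?_⟩
  filter_upwards [ae_hardyWeight_iff.1 (hTf f), ae_restrict_mem measurableSet_Ioo] with x hTx hx
  rw [hTx, integral_hardyKernel_smul hx.1.le]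

/-- Hardy's inequality, compactness of the right Hardy operator.
If `1 < p < ∞`, `0 < R < ∞`, `β + 1/p > 0` and `γ < β + 1`, then the operator
`f ↦ (x ↦ ∫ₓ^R f)` extends to a compact continuous linear operator from
`L^p(x^{γp}dx)` to `L^p(x^{βp}dx)` on `(0,R)`. -/
theorem hardy_right_compact (p R β γ : ℝ) (hp : 1 < p) (hR : 0 < R)
    (hβ : 0 < β + 1 / p) (hγ : γ < β + 1)
    [Fact (1 ≤ ENNReal.ofReal p)] :
    ∃ T : Lp ℝ (ENNReal.ofReal p) (hardyWeight R γ p) →L[ℝ]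
        Lp ℝ (ENNReal.ofReal p) (hardyWeight R β p),
      IsCompactOperator T ∧
      ∀ f : Lp ℝ (ENNReal.ofReal p) (hardyWeight R γ p),
        ∀ᵐ x ∂(volume.restrict (Ioo (0 : ℝ) R)),
          (T f : ℝ → ℝ) x = ∫ t in Ioo x R, (f : ℝ → ℝ) t :=
  hardy_right_compact_general p R β γ hp hR hβ hγ
end

section
/- Let 0 < d < 1. Define a₁(ξ) = tanh(πξ/2) for ξ ∈ ℝ, and a₂(ξ) = coth(πξ/2) − 2/(πξ) for ξ ≠ 0, extended by a₂(0) = 0. Then there exists a constant c > 0 such that for all n ∈ ℕ, all m ∈ {0,1,2,3,4} and all ξ ∈ ℝ (with ξ ≠ 0 for a₂ when differentiating there, the bounds holding at 0 by the smooth extension), one has (1+ξ²)^{(n+m)/2} · |a_j^{(n+m)}(ξ)| ≤ c · nⁿ / (e·d)ⁿ for j = 1, 2, where nⁿ is interpreted as 1 when n = 0. In particular, a₁ and a₂ satisfy the Fourier multiplier condition required for boundedness on L^p spaces with exponential weights e^{±d|x|}. -/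
open Real

/-- The multiplier `a₁(ξ) = tanh(πξ/2)`. -/
noncomputable def mult₁ (ξ : ℝ) : ℝ := Real.tanh (Real.pi * ξ / 2)

/-- The multiplier `a₂(ξ) = coth(πξ/2) − 2/(πξ)`, extended by `a₂(0) = 0`. -/
noncomputable def mult₂ (ξ : ℝ) : ℝ :=
  if ξ = 0 then 0
  else Real.cosh (Real.pi * ξ / 2) / Real.sinh (Real.pi * ξ / 2) - 2 / (Real.pi * ξ)

/-!
Write `⟨x⟩ = √(1 + x²)`. For each `r < 1`, the function `tanh (πz/2)` is holomorphic and bounded on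
the union `Ω` of the discs `|z - x| < r⟨x⟩`, `x` real: the hyperbola
`(1 - r²) y² = r² (1 - r² + x²)` separates `Ω` from the poles `±i, ±3i, …`. Cauchy's estimate
on these discs bounds `⟨x⟩ᵏ |a⁽ᵏ⁾ x|` by a multiple of `k! / sᵏ` for `s < r`, and Stirling's formula
turns `(n + m)! / sⁿ⁺ᵐ` into `nⁿ / (ed)ⁿ` for `d < s`.

The second multiplier reduces to the first, since the duplication formula
`coth w = (tanh (w/2) + coth (w/2)) / 2` iterates to `coth w - 1/w = ∑_{j ≥ 1} 2⁻ʲ tanh (2⁻ʲ w)`,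
and `Ω` is stable under `z ↦ z/2`, so that this series inherits holomorphy and boundedness.
-/

open Filter Topology Asymptotics Metric
open scoped Nat

section Factorial

-- The factors `√n` of Stirling's formula and `n + k + 1` of the induction step are absorbed by
-- geometric factors `(p / q) ^ n` with `q < p ≤ 1`.
lemma factorial_add_isBigO (k : ℕ) {q : ℝ} (hq : 0 < q) (hq1 : q < 1) :
    (fun n : ℕ ↦ ((n + k)! : ℝ)) =O[atTop] fun n : ℕ ↦ (n : ℝ) ^ n / (exp 1 * q) ^ n := by
  induction k generalizing q with
  | zero =>
    have hsqrt : (fun n : ℕ ↦ √(2 * n * π)) =O[atTop] fun n : ℕ ↦ q⁻¹ ^ n := by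
      have hlin : (fun n : ℕ ↦ √(2 * n * π)) =O[atTop] fun n : ℕ ↦ (n : ℝ) := by
        refine IsBigO.of_bound (2 * π) (Eventually.of_forall fun n ↦ ?_)
        rw [Real.norm_of_nonneg (sqrt_nonneg _), Real.norm_natCast, sqrt_le_left (by positivity)]
        have hn : (n : ℝ) ≤ (n : ℝ) ^ 2 := mod_cast Nat.le_self_pow two_ne_zero n
        calc 2 * n * π ≤ 2 * (n : ℝ) ^ 2 * π := by gcongr
          _ ≤ 2 * (n : ℝ) ^ 2 * π * (2 * π) :=
            le_mul_of_one_le_right (by positivity) (by linarith [pi_gt_three])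
          _ = (2 * π * n) ^ 2 := by ring
      exact hlin.trans (isLittleO_coe_const_pow_of_one_lt ((one_lt_inv₀ hq).2 hq1)).isBigO
    refine (Stirling.factorial_isEquivalent_stirling.isBigO.trans
      (hsqrt.mul (isBigO_refl _ _))).congr_right fun n ↦ ?_
    rw [← mul_pow, ← div_pow]
    congr 1
    field_simp
  | succ k ih =>
    obtain ⟨p, hqp, hp1⟩ := exists_between hq1
    have hp : 0 < p := hq.trans hqp
    have hpq : 1 < p / q := (one_lt_div hq).2 hqp
    have hconst : (fun _ : ℕ ↦ (k + 1 : ℝ)) =O[atTop] fun n : ℕ ↦ (p / q) ^ n := by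
      simpa only [pow_zero, mul_one] using
        (isLittleO_pow_const_const_pow_of_one_lt (R := ℝ) 0 hpq).isBigO.const_mul_left (k + 1 : ℝ)
    have hlin : (fun n : ℕ ↦ (n : ℝ) + (k + 1 : ℝ)) =O[atTop] fun n : ℕ ↦ (p / q) ^ n :=
      (isLittleO_coe_const_pow_of_one_lt hpq).isBigO.add hconst
    refine (hlin.mul (ih hp hp1)).congr (fun n ↦ ?_) fun n ↦ ?_
    · rw [← add_assoc n k 1, Nat.factorial_succ]
      push_cast
      ring
    · rw [← div_pow, ← div_pow, ← mul_pow]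
      congr 1
      field_simp

lemma exists_factorial_add_le (k : ℕ) {q : ℝ} (hq : 0 < q) (hq1 : q < 1) :
    ∃ c : ℝ, 0 < c ∧ ∀ n : ℕ, ((n + k)! : ℝ) ≤ c * ((n : ℝ) ^ n / (exp 1 * q) ^ n) := by
  obtain ⟨c, hc, hbound⟩ := bound_of_isBigO_nat_atTop (factorial_add_isBigO k hq hq1)
  refine ⟨c, hc, fun n ↦ ?_⟩
  have hpos : 0 < (n : ℝ) ^ n / (exp 1 * q) ^ n :=
    div_pos (mod_cast Nat.pow_self_pos) (by positivity)
  simpa only [Real.norm_natCast, Real.norm_of_nonneg hpos.le] using hbound hpos.ne'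

lemma exists_factorial_add_div_pow_le (K : ℕ) {d s : ℝ} (hd : 0 < d) (hds : d < s) :
    ∃ c : ℝ, 0 < c ∧ ∀ n m : ℕ, m ≤ K →
      ((n + m)! : ℝ) / s ^ (n + m) ≤ c * ((n : ℝ) ^ n / (exp 1 * d) ^ n) := by
  have hs : 0 < s := hd.trans hds
  obtain ⟨c, hc, hfac⟩ := exists_factorial_add_le K (div_pos hd hs) ((div_lt_one hs).2 hds)
  refine ⟨(s⁻¹ + 1) ^ K * c, by positivity, fun n m hm ↦ ?_⟩
  have hpow : s⁻¹ ^ m ≤ (s⁻¹ + 1) ^ K :=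
    (pow_le_pow_left₀ (by positivity) (by linarith) m).trans
      (pow_le_pow_right₀ (by linarith [inv_pos.2 hs]) hm)
  calc ((n + m)! : ℝ) / s ^ (n + m) = s⁻¹ ^ m * ((n + m)! / s ^ n) := by
        rw [pow_add, inv_pow]
        field_simp
    _ ≤ (s⁻¹ + 1) ^ K * (c * ((n : ℝ) ^ n / (exp 1 * (d / s)) ^ n) / s ^ n) := by
        gcongr
        exact (Nat.cast_le.2 (Nat.factorial_le (by lia))).trans (hfac n)
    _ = (s⁻¹ + 1) ^ K * c * ((n : ℝ) ^ n / (exp 1 * d) ^ n) := by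
        rw [mul_div_assoc, div_div, ← mul_pow, mul_assoc (exp 1), div_mul_cancel₀ d hs.ne',
          mul_assoc]

end Factorial

section ConicNhd

variable {r : ℝ}

/-- The union of the discs of radius `r⟨x⟩` centred at the points `x` of the real line, where
`⟨x⟩ = √(1 + x²)`. Cauchy's estimate on these discs gives derivative bounds with the decay `⟨x⟩⁻ᵏ`
for functions holomorphic on this region. -/
def conicNhd (r : ℝ) : Set ℂ := ⋃ x : ℝ, ball (x : ℂ) (r * √(1 + x ^ 2))

lemma ball_subset_conicNhd (r x : ℝ) : ball (x : ℂ) (r * √(1 + x ^ 2)) ⊆ conicNhd r :=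
  Set.subset_iUnion (fun x : ℝ ↦ ball (x : ℂ) (r * √(1 + x ^ 2))) x

lemma isOpen_conicNhd (r : ℝ) : IsOpen (conicNhd r) := isOpen_iUnion fun _ ↦ isOpen_ball

lemma ofReal_mem_conicNhd (hr : 0 < r) (x : ℝ) : (x : ℂ) ∈ conicNhd r :=
  ball_subset_conicNhd r x (mem_ball_self (by positivity))

lemma pos_of_mem_conicNhd {z : ℂ} (hz : z ∈ conicNhd r) : 0 < r := by
  obtain ⟨x, hx⟩ := Set.mem_iUnion.1 hz
  exact pos_of_mul_pos_left (pos_of_mem_ball hx) (sqrt_nonneg _)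

lemma starConvex_conicNhd (r : ℝ) : StarConvex ℝ 0 (conicNhd r) := by
  refine starConvex_zero_iff.2 fun z hz t ht₀ ht₁ ↦ ?_
  obtain ⟨x, hx⟩ := Set.mem_iUnion.1 hz
  have hr : 0 < r := pos_of_mem_conicNhd hz
  refine ball_subset_conicNhd r (t * x) ?_
  rw [mem_ball_iff_norm] at hx ⊢
  have hbracket : t * √(1 + x ^ 2) ≤ √(1 + (t * x) ^ 2) := by
    refine le_sqrt_of_sq_le ?_
    rw [mul_pow, sq_sqrt (by positivity), mul_pow]
    nlinarith
  rcases ht₀.eq_or_lt with rfl | ht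
  · simpa using hr
  · calc ‖t • z - ((t * x : ℝ) : ℂ)‖ = t * ‖z - x‖ := by
          rw [Complex.ofReal_mul, Complex.real_smul, ← mul_sub, norm_mul, Complex.norm_real,
            Real.norm_of_nonneg ht₀]
      _ < t * (r * √(1 + x ^ 2)) := by gcongr
      _ = r * (t * √(1 + x ^ 2)) := by ring
      _ ≤ r * √(1 + (t * x) ^ 2) := by gcongr

lemma im_sq_le_of_mem_conicNhd (hr : r < 1) {z : ℂ} (hz : z ∈ conicNhd r) :
    (1 - r ^ 2) * z.im ^ 2 ≤ r ^ 2 * (1 - r ^ 2 + z.re ^ 2) := by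
  obtain ⟨x, hx⟩ := Set.mem_iUnion.1 hz
  have hr₀ : 0 < r := pos_of_mem_conicNhd hz
  have hdisc : (z.re - x) ^ 2 + z.im ^ 2 ≤ r ^ 2 * (1 + x ^ 2) := by
    have hsq := pow_le_pow_left₀ (norm_nonneg _) (mem_ball_iff_norm.1 hx).le 2
    rw [mul_pow, sq_sqrt (by positivity), Complex.sq_norm, Complex.normSq_apply] at hsq
    simpa only [Complex.sub_re, Complex.sub_im, Complex.ofReal_re, Complex.ofReal_im, sub_zero,
      ← sq] using hsq
  nlinarith [sq_nonneg ((1 - r ^ 2) * x - z.re),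
    mul_le_mul_of_nonneg_left hdisc (by nlinarith : 0 ≤ 1 - r ^ 2)]

lemma abs_im_le_or_le_abs_re_of_mem_conicNhd (hr : r < 1) {ρ : ℝ} (hρ : 0 ≤ ρ) {z : ℂ}
    (hz : z ∈ conicNhd r) : |z.im| ≤ ρ ∨ √((1 - r ^ 2) * (ρ ^ 2 - r ^ 2)) ≤ |z.re| := by
  refine or_iff_not_imp_left.2 fun him ↦ ?_
  have hr₀ : 0 < r := pos_of_mem_conicNhd hz
  have hr_sq : r ^ 2 < 1 := by nlinarith
  have hρ_sq : ρ ^ 2 ≤ z.im ^ 2 := by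
    rw [← sq_abs z.im]
    exact pow_le_pow_left₀ hρ (not_le.1 him).le 2
  rw [← sqrt_sq_eq_abs]
  refine sqrt_le_sqrt ?_
  nlinarith [im_sq_le_of_mem_conicNhd hr hz, sq_nonneg z.re]

end ConicNhd

section Cauchy

lemma iteratedDeriv_re_comp_ofReal {F : ℂ → ℂ} (hF : ∀ x : ℝ, AnalyticAt ℂ F x) (k : ℕ) :
    iteratedDeriv k (fun x : ℝ ↦ (F x).re) = fun x : ℝ ↦ (iteratedDeriv k F x).re := by
  induction k with
  | zero => simp only [iteratedDeriv_zero]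
  | succ k ih =>
    funext x
    have hdiff : DifferentiableAt ℂ (iteratedDeriv k F) x := by
      rw [iteratedDeriv_eq_iterate]
      exact ((hF x).iterated_deriv k).differentiableAt
    rw [iteratedDeriv_succ, ih, iteratedDeriv_succ, hdiff.hasDerivAt.real_of_complex.deriv]

variable {r : ℝ} {F : ℂ → ℂ} {M : ℝ}

lemma bracket_rpow_mul_abs_iteratedDeriv_le {s : ℝ} (hs : 0 < s) (hsr : s < r)
    (hF : DifferentiableOn ℂ F (conicNhd r)) (hM : ∀ z ∈ conicNhd r, ‖F z‖ ≤ M) (k : ℕ) (x : ℝ) :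
    (1 + x ^ 2) ^ ((k : ℝ) / 2) * |iteratedDeriv k (fun x : ℝ ↦ (F x).re) x| ≤
      k ! * M / s ^ k := by
  have hanalytic (y : ℝ) : AnalyticAt ℂ F y :=
    hF.analyticAt ((isOpen_conicNhd r).mem_nhds (ofReal_mem_conicNhd (hs.trans hsr) y))
  have hdisc : closedBall (x : ℂ) (s * √(1 + x ^ 2)) ⊆ conicNhd r :=
    (closedBall_subset_ball (by gcongr)).trans (ball_subset_conicNhd r x)
  have hcauchy : ‖iteratedDeriv k F x‖ ≤ k ! * M / (s * √(1 + x ^ 2)) ^ k :=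
    Complex.norm_iteratedDeriv_le_of_forall_mem_sphere_norm_le k (by positivity)
      ((hF.mono hdisc).diffContOnCl_ball subset_rfl)
      fun z hz ↦ hM z (hdisc (sphere_subset_closedBall hz))
  rw [iteratedDeriv_re_comp_ofReal hanalytic, rpow_div_two_eq_sqrt _ (by positivity), rpow_natCast]
  calc √(1 + x ^ 2) ^ k * |(iteratedDeriv k F x).re|
      ≤ √(1 + x ^ 2) ^ k * (k ! * M / (s * √(1 + x ^ 2)) ^ k) := by
        gcongr
        exact (Complex.abs_re_le_norm _).trans hcauchy
    _ = k ! * M / s ^ k := by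
        rw [mul_pow]
        field_simp

lemma exists_multiplier_bound_of_norm_le {d : ℝ} (hd : 0 < d) (hdr : d < r) (hM₀ : 0 < M) (K : ℕ) :
    ∃ c : ℝ, 0 < c ∧ ∀ F : ℂ → ℂ, DifferentiableOn ℂ F (conicNhd r) →
      (∀ z ∈ conicNhd r, ‖F z‖ ≤ M) → ∀ n m : ℕ, m ≤ K → ∀ ξ : ℝ,
        (1 + ξ ^ 2) ^ (((n + m : ℕ) : ℝ) / 2) *
          |iteratedDeriv (n + m) (fun x : ℝ ↦ (F x).re) ξ| ≤
            c * (n : ℝ) ^ n / (exp 1 * d) ^ n := by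
  obtain ⟨s, hds, hsr⟩ := exists_between hdr
  obtain ⟨c, hc, hfac⟩ := exists_factorial_add_div_pow_le K hd hds
  refine ⟨M * c, by positivity, fun F hF hM n m hm ξ ↦ ?_⟩
  calc _ ≤ (n + m)! * M / s ^ (n + m) :=
        bracket_rpow_mul_abs_iteratedDeriv_le (hd.trans hds) hsr hF hM (n + m) ξ
    _ = M * ((n + m)! / s ^ (n + m)) := by ring
    _ ≤ M * (c * ((n : ℝ) ^ n / (exp 1 * d) ^ n)) := by gcongr; exact hfac n m hm
    _ = M * c * (n : ℝ) ^ n / (exp 1 * d) ^ n := by ring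

end Cauchy

section HyperbolicBounds

lemma norm_cosh_sq (z : ℂ) : ‖Complex.cosh z‖ ^ 2 = sinh z.re ^ 2 + cos z.im ^ 2 := by
  have hcosh : Complex.cosh z =
      (cosh z.re * cos z.im : ℝ) + (sinh z.re * sin z.im : ℝ) * Complex.I := by
    conv_lhs => rw [← Complex.re_add_im z, Complex.cosh_add, Complex.cosh_mul_I, Complex.sinh_mul_I]
    push_cast
    ring
  rw [hcosh, Complex.sq_norm, Complex.normSq_add_mul_I, mul_pow, mul_pow, cosh_sq, sin_sq]
  ring

lemma abs_sinh_re_le_norm_cosh (z : ℂ) : |sinh z.re| ≤ ‖Complex.cosh z‖ :=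
  abs_le_of_sq_le_sq (by rw [norm_cosh_sq]; exact le_add_of_nonneg_right (sq_nonneg _))
    (norm_nonneg _)

lemma abs_cos_im_le_norm_cosh (z : ℂ) : |cos z.im| ≤ ‖Complex.cosh z‖ :=
  abs_le_of_sq_le_sq (by rw [norm_cosh_sq]; exact le_add_of_nonneg_left (sq_nonneg _))
    (norm_nonneg _)

lemma norm_tanh_le {z : ℂ} (hz : Complex.cosh z ≠ 0) :
    ‖Complex.tanh z‖ ≤ 1 + ‖Complex.cosh z‖⁻¹ := by
  have hcosh : 0 < ‖Complex.cosh z‖ := norm_pos_iff.2 hz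
  have hsinh : ‖Complex.sinh z‖ ≤ ‖Complex.cosh z‖ + 1 := by
    refine le_of_sq_le_sq ?_ (by positivity)
    calc ‖Complex.sinh z‖ ^ 2 = ‖Complex.cosh z ^ 2 - 1‖ := by rw [← norm_pow, Complex.sinh_sq]
      _ ≤ ‖Complex.cosh z‖ ^ 2 + 1 := by
        rw [← norm_pow]
        simpa only [norm_one] using norm_sub_le (Complex.cosh z ^ 2) 1
      _ ≤ (‖Complex.cosh z‖ + 1) ^ 2 := by linarith [add_sq ‖Complex.cosh z‖ 1]
  calc ‖Complex.tanh z‖ = ‖Complex.sinh z‖ / ‖Complex.cosh z‖ := by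
        rw [Complex.tanh_eq_sinh_div_cosh, norm_div]
    _ ≤ (‖Complex.cosh z‖ + 1) / ‖Complex.cosh z‖ := by gcongr
    _ = 1 + ‖Complex.cosh z‖⁻¹ := by rw [add_div, div_self hcosh.ne', one_div]

lemma abs_le_abs_sinh (x : ℝ) : |x| ≤ |sinh x| := by
  rw [abs_sinh]
  exact self_le_sinh_iff.2 (abs_nonneg x)

lemma one_sub_abs_le_cos_pi_mul_div_two {y : ℝ} (hy : |y| ≤ 1) : 1 - |y| ≤ cos (π * y / 2) := by
  have habs : |π * y / 2| = π * |y| / 2 := by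
    rw [abs_div, abs_mul, abs_of_pos pi_pos, abs_two]
  rw [← cos_abs, habs]
  calc 1 - |y| = 1 - 2 / π * (π * |y| / 2) := by field_simp
    _ ≤ cos (π * |y| / 2) :=
      one_sub_mul_le_cos (by positivity) (by nlinarith [pi_pos])

lemma exists_le_norm_cosh_of_mem_conicNhd {r : ℝ} (hr : 0 < r) (hr1 : r < 1) :
    ∃ κ : ℝ, 0 < κ ∧ ∀ z ∈ conicNhd r, κ ≤ ‖Complex.cosh (π * z / 2)‖ := by
  obtain ⟨ρ, hrρ, hρ1⟩ := exists_between hr1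
  have hre (z : ℂ) : (π * z / 2 : ℂ).re = π * z.re / 2 := by simp
  have him (z : ℂ) : (π * z / 2 : ℂ).im = π * z.im / 2 := by simp
  refine ⟨min (1 - ρ) √((1 - r ^ 2) * (ρ ^ 2 - r ^ 2)),
    lt_min (by linarith) (sqrt_pos.2 (mul_pos (by nlinarith) (by nlinarith))), fun z hz ↦ ?_⟩
  rcases abs_im_le_or_le_abs_re_of_mem_conicNhd hr1 (hr.trans hrρ).le hz with hnear | hfar
  · calc min (1 - ρ) _ ≤ 1 - ρ := min_le_left _ _
      _ ≤ 1 - |z.im| := by linarith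
      _ ≤ cos (π * z.im / 2) := one_sub_abs_le_cos_pi_mul_div_two (hnear.trans hρ1.le)
      _ ≤ |cos (π * z.im / 2)| := le_abs_self _
      _ ≤ ‖Complex.cosh (π * z / 2)‖ := him z ▸ abs_cos_im_le_norm_cosh _
  · calc min (1 - ρ) _ ≤ √((1 - r ^ 2) * (ρ ^ 2 - r ^ 2)) := min_le_right _ _
      _ ≤ |z.re| := hfar
      _ ≤ |π * z.re / 2| := by
        rw [abs_div, abs_mul, abs_of_pos pi_pos, abs_two]
        nlinarith [abs_nonneg z.re, pi_gt_three]
      _ ≤ |sinh (π * z.re / 2)| := abs_le_abs_sinh _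
      _ ≤ ‖Complex.cosh (π * z / 2)‖ := hre z ▸ abs_sinh_re_le_norm_cosh _

end HyperbolicBounds

section DyadicSum

variable {E : Type*} [NormedAddCommGroup E] [NormedSpace ℂ E]

/-- The series `∑_{j ≥ 1} 2⁻ʲ F (2⁻ʲ z)`, indexed from `j = 0` by shifting the exponents. It turns
`tanh` into `coth w - 1/w`. -/
noncomputable def dyadicSum (F : ℂ → E) (z : ℂ) : E :=
  ∑' j : ℕ, (1 / 2 : ℂ) ^ (j + 1) • F ((1 / 2 : ℝ) ^ (j + 1) • z)

variable {F : ℂ → E} {S : Set ℂ} {M : ℝ}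

lemma half_pow_smul_mem (hS : StarConvex ℝ 0 S) {z : ℂ} (hz : z ∈ S) (j : ℕ) :
    (1 / 2 : ℝ) ^ j • z ∈ S :=
  hS.smul_mem hz (by positivity) (pow_le_one₀ (by norm_num) (by norm_num))

lemma norm_dyadicSum_term_le (hS : StarConvex ℝ 0 S) (hM : ∀ z ∈ S, ‖F z‖ ≤ M) {z : ℂ} (hz : z ∈ S)
    (j : ℕ) : ‖(1 / 2 : ℂ) ^ (j + 1) • F ((1 / 2 : ℝ) ^ (j + 1) • z)‖ ≤ M / 2 / 2 ^ j := by
  have hhalf : ‖(1 / 2 : ℂ)‖ = 1 / 2 := by norm_num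
  rw [norm_smul, norm_pow, hhalf]
  calc (1 / 2 : ℝ) ^ (j + 1) * ‖F ((1 / 2 : ℝ) ^ (j + 1) • z)‖ ≤ (1 / 2 : ℝ) ^ (j + 1) * M := by
        gcongr
        exact hM _ (half_pow_smul_mem hS hz (j + 1))
    _ = M / 2 / 2 ^ j := by
        rw [one_div_pow, pow_succ]
        ring

lemma norm_dyadicSum_le (hS : StarConvex ℝ 0 S) (hM : ∀ z ∈ S, ‖F z‖ ≤ M) {z : ℂ} (hz : z ∈ S) :
    ‖dyadicSum F z‖ ≤ M :=
  tsum_of_norm_bounded (hasSum_geometric_two' M) (norm_dyadicSum_term_le hS hM hz)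

lemma differentiableOn_dyadicSum [CompleteSpace E] (hSo : IsOpen S) (hS : StarConvex ℝ 0 S)
    (hF : DifferentiableOn ℂ F S) (hM : ∀ z ∈ S, ‖F z‖ ≤ M) :
    DifferentiableOn ℂ (dyadicSum F) S := by
  refine Complex.differentiableOn_tsum_of_summable_norm (summable_geometric_two' M) (fun j ↦ ?_) hSo
    fun j z hz ↦ norm_dyadicSum_term_le hS hM hz j
  exact (hF.comp (by fun_prop) fun z hz ↦ half_pow_smul_mem hS hz (j + 1)).const_smul _

end DyadicSum

section TanhSeries

lemma tanh_eq_two_mul_coth_two_mul_sub_coth {w : ℝ} (hw : w ≠ 0) :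
    tanh w = 2 * (cosh (2 * w) / sinh (2 * w)) - cosh w / sinh w := by
  have hsinh : sinh w ≠ 0 := sinh_ne_zero.2 hw
  have hcosh : cosh w ≠ 0 := (cosh_pos w).ne'
  rw [tanh_eq_sinh_div_cosh, cosh_two_mul, sinh_two_mul]
  field_simp
  ring

lemma tendsto_mul_coth_nhdsNE_zero :
    Tendsto (fun t : ℝ ↦ t * (cosh t / sinh t)) (𝓝[≠] 0) (𝓝 1) := by
  have hsinh : Tendsto (fun t : ℝ ↦ t⁻¹ * sinh t) (𝓝[≠] 0) (𝓝 1) := by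
    simpa using hasDerivAt_iff_tendsto_slope_zero.1 (hasDerivAt_sinh 0)
  have hcosh : Tendsto cosh (𝓝[≠] 0) (𝓝 1) := by
    simpa only [cosh_zero] using (continuous_cosh.tendsto 0).mono_left nhdsWithin_le_nhds
  have hquot := hcosh.div hsinh one_ne_zero
  rw [div_one] at hquot
  refine hquot.congr fun t ↦ ?_
  rw [Pi.div_apply, div_mul_eq_div_div, div_inv_eq_mul]
  ring

lemma hasSum_half_pow_mul_tanh {w : ℝ} (hw : w ≠ 0) :
    HasSum (fun j : ℕ ↦ (1 / 2 : ℝ) ^ (j + 1) * tanh ((1 / 2) ^ (j + 1) * w))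
      (cosh w / sinh w - 1 / w) := by
  let scaledCoth (j : ℕ) : ℝ :=
    (1 / 2) ^ j * (cosh ((1 / 2) ^ j * w) / sinh ((1 / 2) ^ j * w))
  have htelescope (j : ℕ) : (1 / 2 : ℝ) ^ (j + 1) * tanh ((1 / 2) ^ (j + 1) * w) =
      scaledCoth j - scaledCoth (j + 1) := by
    rw [tanh_eq_two_mul_coth_two_mul_sub_coth (by positivity)]
    have htwo : 2 * ((1 / 2) ^ (j + 1) * w) = (1 / 2) ^ j * w := by ring
    rw [htwo]
    simp only [scaledCoth]
    ring
  have hlim : Tendsto scaledCoth atTop (𝓝 (1 / w)) := by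
    have harg : Tendsto (fun j : ℕ ↦ (1 / 2 : ℝ) ^ j * w) atTop (𝓝[≠] 0) := by
      refine tendsto_nhdsWithin_iff.2 ⟨?_, Eventually.of_forall fun j ↦ ?_⟩
      · simpa only [zero_mul] using (tendsto_pow_atTop_nhds_zero_of_lt_one (r := (1 / 2 : ℝ))
          (by norm_num) (by norm_num)).mul_const w
      · exact mul_ne_zero (by positivity) hw
    refine ((tendsto_mul_coth_nhdsNE_zero.comp harg).div_const w).congr fun j ↦ ?_
    simp only [Function.comp_apply, scaledCoth]
    field_simp
  have hsummable : Summable fun j : ℕ ↦ (1 / 2 : ℝ) ^ (j + 1) * tanh ((1 / 2) ^ (j + 1) * w) := by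
    refine Summable.of_norm_bounded
      ((summable_nat_add_iff 1).2 summable_geometric_two) fun j ↦ ?_
    rw [norm_mul, norm_pow, Real.norm_of_nonneg (by norm_num : (0 : ℝ) ≤ 1 / 2)]
    exact mul_le_of_le_one_right (by positivity) (abs_tanh_lt_one _).le
  rw [hsummable.hasSum_iff_tendsto_nat]
  simp only [htelescope, Finset.sum_range_sub']
  simpa only [scaledCoth, pow_zero, one_mul] using hlim.const_sub (scaledCoth 0)

lemma hasSum_mult₂ (ξ : ℝ) :
    HasSum (fun j : ℕ ↦ (1 / 2 : ℝ) ^ (j + 1) * mult₁ ((1 / 2) ^ (j + 1) * ξ)) (mult₂ ξ) := by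
  rcases eq_or_ne ξ 0 with rfl | hξ
  · simp [mult₁, mult₂]
  · have hinv : 2 / (π * ξ) = 1 / (π * ξ / 2) := by rw [one_div_div]
    have harg (j : ℕ) : π * ((1 / 2) ^ (j + 1) * ξ) / 2 = (1 / 2) ^ (j + 1) * (π * ξ / 2) := by ring
    simp only [mult₁, mult₂, if_neg hξ, harg, hinv]
    exact hasSum_half_pow_mul_tanh (by positivity)

end TanhSeries

section Multipliers

/-- The meromorphic extension `tanh (πz/2)` of `mult₁` to the complex plane. -/
noncomputable def complexMult₁ (z : ℂ) : ℂ := Complex.tanh (π * z / 2)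

lemma complexMult₁_ofReal (ξ : ℝ) : complexMult₁ ξ = (mult₁ ξ : ℂ) := by
  simp [complexMult₁, mult₁]

lemma dyadicSum_complexMult₁_ofReal (ξ : ℝ) : dyadicSum complexMult₁ ξ = (mult₂ ξ : ℂ) := by
  rw [← (Complex.hasSum_ofReal.2 (hasSum_mult₂ ξ)).tsum_eq]
  refine tsum_congr fun j ↦ ?_
  rw [Complex.real_smul, ← Complex.ofReal_mul, complexMult₁_ofReal, smul_eq_mul]
  push_cast
  rfl

variable {r : ℝ}

lemma differentiableOn_complexMult₁ (hr : 0 < r) (hr1 : r < 1) :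
    DifferentiableOn ℂ complexMult₁ (conicNhd r) := by
  obtain ⟨κ, hκ, hcosh⟩ := exists_le_norm_cosh_of_mem_conicNhd hr hr1
  have hquot : complexMult₁ = fun z ↦ Complex.sinh (π * z / 2) / Complex.cosh (π * z / 2) :=
    funext fun z ↦ Complex.tanh_eq_sinh_div_cosh _
  rw [hquot]
  exact DifferentiableOn.div (by fun_prop) (by fun_prop)
    fun z hz ↦ norm_pos_iff.1 (hκ.trans_le (hcosh z hz))

lemma exists_norm_complexMult₁_le (hr : 0 < r) (hr1 : r < 1) :
    ∃ M : ℝ, 0 < M ∧ ∀ z ∈ conicNhd r, ‖complexMult₁ z‖ ≤ M := by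
  obtain ⟨κ, hκ, hcosh⟩ := exists_le_norm_cosh_of_mem_conicNhd hr hr1
  refine ⟨1 + κ⁻¹, by positivity, fun z hz ↦ ?_⟩
  have hpos : 0 < ‖Complex.cosh (π * z / 2)‖ := hκ.trans_le (hcosh z hz)
  calc ‖complexMult₁ z‖ ≤ 1 + ‖Complex.cosh (π * z / 2)‖⁻¹ := norm_tanh_le (norm_pos_iff.1 hpos)
    _ ≤ 1 + κ⁻¹ := by gcongr; exact hcosh z hz

theorem multiplier_condition_tanh_coth_general (d : ℝ) (hd : 0 < d) (hd1 : d < 1) (K : ℕ) :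
    ∃ c : ℝ, 0 < c ∧ ∀ (n m : ℕ), m ≤ K → ∀ ξ : ℝ,
      ((1 + ξ ^ 2) ^ (((n + m : ℕ) : ℝ) / 2) *
          |iteratedDeriv (n + m) mult₁ ξ| ≤ c * (n : ℝ) ^ n / (Real.exp 1 * d) ^ n) ∧
      ((1 + ξ ^ 2) ^ (((n + m : ℕ) : ℝ) / 2) *
          |iteratedDeriv (n + m) mult₂ ξ| ≤ c * (n : ℝ) ^ n / (Real.exp 1 * d) ^ n) := by
  obtain ⟨r, hdr, hr1⟩ := exists_between hd1
  have hr : 0 < r := hd.trans hdr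
  obtain ⟨M, hM₀, hM⟩ := exists_norm_complexMult₁_le hr hr1
  obtain ⟨c, hc, hbound⟩ := exists_multiplier_bound_of_norm_le hd hdr hM₀ K
  have hhol : DifferentiableOn ℂ complexMult₁ (conicNhd r) := differentiableOn_complexMult₁ hr hr1
  have hstar : StarConvex ℝ 0 (conicNhd r) := starConvex_conicNhd r
  refine ⟨c, hc, fun n m hm ξ ↦ ⟨?_, ?_⟩⟩
  · simpa only [complexMult₁_ofReal, Complex.ofReal_re] using
      hbound complexMult₁ hhol hM n m hm ξ
  · simpa only [dyadicSum_complexMult₁_ofReal, Complex.ofReal_re] using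
      hbound (dyadicSum complexMult₁)
        (differentiableOn_dyadicSum (isOpen_conicNhd r) hstar hhol hM)
        (fun _ ↦ norm_dyadicSum_le hstar hM) n m hm ξ

end Multipliers

/-- For `0 < d < 1`, the multipliers `a₁` and `a₂` satisfy the
exponential-weight Fourier multiplier condition: there is `c > 0` such that for all
`n ∈ ℕ`, `m ≤ 4` and `ξ ∈ ℝ`,
`(1+ξ²)^{(n+m)/2} |a_j^{(n+m)}(ξ)| ≤ c nⁿ/(ed)ⁿ` for `j = 1,2`. -/
theorem multiplier_condition_tanh_coth (d : ℝ) (hd : 0 < d) (hd1 : d < 1) :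
    ∃ c : ℝ, 0 < c ∧ ∀ (n m : ℕ), m ≤ 4 → ∀ ξ : ℝ,
      ((1 + ξ ^ 2) ^ (((n + m : ℕ) : ℝ) / 2) *
          |iteratedDeriv (n + m) mult₁ ξ| ≤ c * (n : ℝ) ^ n / (Real.exp 1 * d) ^ n) ∧
      ((1 + ξ ^ 2) ^ (((n + m : ℕ) : ℝ) / 2) *
          |iteratedDeriv (n + m) mult₂ ξ| ≤ c * (n : ℝ) ^ n / (Real.exp 1 * d) ^ n) :=
  multiplier_condition_tanh_coth_general d hd hd1 4
end

section
/- There exists a constant C > 0 such that for every n ∈ ℕ and every ξ ∈ ℝ, (1+ξ²)^{n/2} · |dⁿ/dξⁿ [tanh(πξ/2)]| ≤ C · n!. That is, the iterated derivatives of ξ ↦ tanh(πξ/2) decay like ⟨ξ⟩^{−n} with factorial-growth constants. -/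
open Real

/-!
Since `π tanh (π x / 2) = i · π cot (π z)` with `z = (1 + i x) / 2`, the Mittag-Leffler expansion
`(π cot π z)⁽ⁿ⁾ = (-1)ⁿ n! ∑ₘ (z + m)⁻ⁿ⁻¹`, `n ≥ 1`, controls the derivatives of `tanh`. The poles
closest to `z` are at distance `‖z‖ = ⟨x⟩ / 2`, so each further derivative gains a factor `⟨x⟩⁻¹` at
the cost of the factorial alone, and what remains is `∑ₘ ‖z + m‖⁻²`. This last sum is evaluated
exactly by taking the imaginary part of the expansion of `π cot π z` itself: it is a multiple of
`tanh (π x / 2) / x`, which is `O(⟨x⟩⁻¹)`. The expansion is used in the upper half-plane, that is,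
for `x > 0`; oddness and continuity give all real `x`.
-/

open UpperHalfPlane
open scoped Nat

section Tanh

lemma tanh_le_self {x : ℝ} (hx : 0 ≤ x) : tanh x ≤ x := by
  have hderiv : ∀ y ∈ interior (Set.Icc 0 x), deriv sinh y ≤ cosh x := fun y hy ↦ by
    rw [interior_Icc] at hy
    rw [Real.deriv_sinh, cosh_le_cosh, abs_of_pos hy.1, abs_of_nonneg hx]
    exact hy.2.le
  have hmvt := (convex_Icc 0 x).image_sub_le_mul_sub_of_deriv_le continuous_sinh.continuousOn
    differentiable_sinh.differentiableOn hderiv 0 ⟨le_rfl, hx⟩ x ⟨hx, le_rfl⟩ hx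
  rw [tanh_eq_sinh_div_cosh, div_le_iff₀ (cosh_pos x), mul_comm]
  simpa using hmvt

lemma sqrt_one_add_sq_mul_tanh_div_le {c x : ℝ} (hc : 0 ≤ c) (hx : 0 < x) :
    √(1 + x ^ 2) * (tanh (c * x) / x) ≤ 1 + c := by
  have hsqrt : √(1 + x ^ 2) ≤ 1 + x := sqrt_le_iff.2 ⟨by positivity, by nlinarith⟩
  have htanh : 0 ≤ tanh (c * x) := by
    rw [tanh_eq_sinh_div_cosh]
    exact div_nonneg (sinh_nonneg_iff.2 (by positivity)) (cosh_pos _).le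
  calc √(1 + x ^ 2) * (tanh (c * x) / x)
      ≤ (1 + x) * (tanh (c * x) / x) := by gcongr
    _ = tanh (c * x) / x + tanh (c * x) := by field_simp
    _ ≤ c * x / x + 1 := by
        gcongr
        exacts [tanh_le_self (by positivity), (tanh_lt_one _).le]
    _ = 1 + c := by field_simp; ring

lemma contDiff_tanh {n : WithTop ℕ∞} : ContDiff ℝ n tanh := by
  simp_rw [funext tanh_eq_sinh_div_cosh]
  exact contDiff_sinh.div contDiff_cosh fun x ↦ (cosh_pos x).ne'

end Tanh

section IteratedDeriv

lemma norm_iteratedDeriv_neg_of_odd {𝕜 F : Type*} [NontriviallyNormedField 𝕜]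
    [NormedAddCommGroup F] [NormedSpace 𝕜 F] {f : 𝕜 → F} (hf : f.Odd) (n : ℕ) (x : 𝕜) :
    ‖iteratedDeriv n f (-x)‖ = ‖iteratedDeriv n f x‖ := by
  have h := iteratedDeriv_comp_neg n f x
  rw [funext hf, iteratedDeriv_fun_neg] at h
  rw [← norm_neg (iteratedDeriv n f x), h, norm_smul, norm_pow, norm_neg, norm_one, one_pow,
    one_mul]

lemma norm_iteratedDeriv_ofReal_comp {f : ℝ → ℝ} {n : ℕ} {x : ℝ} (hf : ContDiffAt ℝ n f x) :
    ‖iteratedDeriv n (fun y ↦ (f y : ℂ)) x‖ = |iteratedDeriv n f x| := by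
  rw [← norm_iteratedFDeriv_eq_norm_iteratedDeriv, ← norm_eq_abs,
    ← norm_iteratedFDeriv_eq_norm_iteratedDeriv]
  exact Complex.ofRealLI.norm_iteratedFDeriv_comp_left hf le_rfl

lemma iteratedDeriv_comp_ofReal_affine {E : Type*} [NormedAddCommGroup E] [NormedSpace ℂ E]
    [CompleteSpace E] {f : ℂ → E} {s : Set ℂ} (hs : IsOpen s) (hf : DifferentiableOn ℂ f s)
    (a b : ℂ) (n : ℕ) {x : ℝ} (hx : a * x + b ∈ s) :
    iteratedDeriv n (fun y : ℝ ↦ f (a * y + b)) x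
      = a ^ n • iteratedDerivWithin n f s (a * x + b) := by
  induction n generalizing x with
  | zero => simp
  | succ n ih =>
    have hline : HasDerivAt (fun y : ℝ ↦ a * (y : ℂ) + b) a x := by
      simpa using ((Complex.ofRealCLM.hasDerivAt (x := x)).const_mul a).add_const b
    have hnear : iteratedDeriv n (fun y : ℝ ↦ f (a * y + b)) =ᶠ[nhds x]
        fun y ↦ a ^ n • iteratedDerivWithin n f s (a * y + b) :=
      (hline.continuousAt.eventually_mem (hs.mem_nhds hx)).mono fun y hy ↦ ih hy
    have houter : HasDerivAt (iteratedDerivWithin n f s)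
        (iteratedDerivWithin (n + 1) f s (a * x + b)) (a * x + b) := by
      rw [iteratedDerivWithin_succ, derivWithin_of_isOpen hs hx]
      exact (((hf.contDiffOn hs (n := ⊤)).differentiableOn_iteratedDerivWithin
        (WithTop.coe_lt_top _) hs.uniqueDiffOn).differentiableAt (hs.mem_nhds hx)).hasDerivAt
    rw [iteratedDeriv_succ, hnear.deriv_eq]
    refine ((houter.scomp x hline).const_smul (a ^ n)).deriv.trans ?_
    rw [smul_smul, pow_succ]

end IteratedDeriv

section Cotangent

variable {z : ℂ}

lemma summable_one_div_norm_add_intCast_pow (z : ℂ) {k : ℕ} (hk : 2 ≤ k) :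
    Summable fun m : ℤ ↦ 1 / ‖z + m‖ ^ k := by
  simpa using (EisensteinSeries.linear_right_summable z 1 (k := k) (mod_cast hk)).norm

lemma im_one_div_add_intCast (z : ℂ) (m : ℤ) :
    (1 / (z + m)).im = -z.im * (1 / ‖z + m‖ ^ 2) := by
  simp [Complex.inv_im, Complex.normSq_eq_norm_sq, div_eq_mul_inv]

lemma im_pi_mul_cot_pi_mul_eq_tsum (hz : z ∈ Complex.integerComplement) :
    (π * Complex.cot (π * z)).im = -z.im * ∑' m : ℤ, 1 / ‖z + m‖ ^ 2 := by
  set g : ℤ → ℝ := fun m ↦ 1 / ‖z + m‖ ^ 2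
  have hsum : Summable g := summable_one_div_norm_add_intCast_pow z le_rfl
  have hpos : Summable fun n : ℕ ↦ g (n + 1) :=
    hsum.comp_injective (i := fun n : ℕ ↦ (n + 1 : ℤ)) fun m n h ↦ by simpa using h
  have hneg : Summable fun n : ℕ ↦ g (-(n + 1)) :=
    hsum.comp_injective (i := fun n : ℕ ↦ (-(n + 1) : ℤ)) fun m n h ↦ by simpa using h
  have hzero : (1 / z).im = -z.im * g 0 := by
    rw [← im_one_div_add_intCast, Int.cast_zero, add_zero]
  have hpair (n : ℕ) : (cotTerm z n).im = -z.im * (g (n + 1) + g (-(n + 1))) := by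
    rw [mul_add, ← im_one_div_add_intCast, ← im_one_div_add_intCast, ← Complex.add_im, add_comm]
    push_cast
    rw [← sub_eq_add_neg]
  calc (π * Complex.cot (π * z)).im = (1 / z + ∑' n, cotTerm z n).im := by
        rw [← sub_eq_iff_eq_add'.1 (cot_series_rep' hz)]
    _ = -z.im * g 0 + ∑' n : ℕ, -z.im * (g (n + 1) + g (-(n + 1))) := by
        rw [Complex.add_im, Complex.im_tsum (summable_cotTerm hz), hzero, tsum_congr hpair]
    _ = -z.im * ∑' m, g m := by
        rw [tsum_mul_left, hpos.tsum_add hneg, tsum_of_add_one_of_neg_add_one hpos hneg]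
        ring

lemma differentiableOn_pi_mul_cot_pi_mul :
    DifferentiableOn ℂ (fun z : ℂ ↦ π * Complex.cot (π * z)) upperHalfPlaneSet := fun z hz ↦
  ((cot_pi_mul_contDiffWithinAt 1 (coe_mem_integerComplement ⟨z, hz⟩)).differentiableWithinAt
    one_ne_zero).const_mul _

lemma pow_mul_norm_iteratedDerivWithin_cot_le (hz : z ∈ upperHalfPlaneSet) {r : ℝ} (hr : 0 ≤ r)
    (hrz : ∀ m : ℤ, r ≤ ‖z + m‖) (n : ℕ) :
    r ^ n * ‖iteratedDerivWithin (n + 1) (fun z : ℂ ↦ π * Complex.cot (π * z))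
        upperHalfPlaneSet z‖
      ≤ (n + 1)! * ∑' m : ℤ, 1 / ‖z + m‖ ^ 2 := by
  have hne (m : ℤ) : 0 < ‖z + m‖ :=
    norm_pos_iff.2 (Complex.integerComplement_add_ne_zero (coe_mem_integerComplement ⟨z, hz⟩) m)
  have hsum : Summable fun m : ℤ ↦ 1 / ‖z + m‖ ^ (n + 2) :=
    summable_one_div_norm_add_intCast_pow z (by lia)
  have hterm (m : ℤ) : r ^ n * (1 / ‖z + m‖ ^ (n + 2)) ≤ 1 / ‖z + m‖ ^ 2 := by
    have := hne m
    calc r ^ n * (1 / ‖z + m‖ ^ (n + 2)) ≤ ‖z + m‖ ^ n * (1 / ‖z + m‖ ^ (n + 2)) := by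
          gcongr
          exact hrz m
      _ = 1 / ‖z + m‖ ^ 2 := by rw [pow_add]; field_simp
  have hseries : ‖∑' m : ℤ, 1 / (z + m) ^ (n + 2)‖ ≤ ∑' m : ℤ, 1 / ‖z + m‖ ^ (n + 2) := by
    simpa using norm_tsum_le_tsum_norm (f := fun m : ℤ ↦ 1 / (z + m) ^ (n + 2))
      (by simpa using hsum)
  rw [iteratedDerivWithin_cot_pi_mul_eq_mul_tsum_div_pow n.succ_pos hz]
  calc r ^ n * ‖(-1) ^ (n + 1) * ((n + 1)! : ℂ) * ∑' m : ℤ, 1 / (z + m) ^ (n + 2)‖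
      = (n + 1)! * (r ^ n * ‖∑' m : ℤ, 1 / (z + m) ^ (n + 2)‖) := by
        simp only [norm_mul, norm_pow, norm_neg, norm_one, one_pow, one_mul, Complex.norm_natCast]
        ring
    _ ≤ (n + 1)! * (r ^ n * ∑' m : ℤ, 1 / ‖z + m‖ ^ (n + 2)) := by gcongr
    _ ≤ (n + 1)! * ∑' m : ℤ, 1 / ‖z + m‖ ^ 2 := by
        rw [← tsum_mul_left]
        gcongr
        exacts [hsum.mul_left _, summable_one_div_norm_add_intCast_pow z le_rfl, hterm _]

lemma norm_le_norm_add_intCast (hz : |z.re| ≤ 1 / 2) (m : ℤ) : ‖z‖ ≤ ‖z + m‖ := by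
  have hm : |(m : ℝ)| ≤ (m : ℝ) ^ 2 := by
    rw [← sq_abs]
    exact_mod_cast Int.le_self_sq |m|
  have hcross : |2 * z.re * m| ≤ |(m : ℝ)| := by
    rw [abs_mul, abs_mul, abs_two]
    nlinarith [abs_nonneg (m : ℝ)]
  rw [← sq_le_sq₀ (norm_nonneg _) (norm_nonneg _), Complex.sq_norm, Complex.sq_norm,
    Complex.normSq_apply, Complex.normSq_apply]
  simp only [Complex.add_re, Complex.intCast_re, Complex.add_im, Complex.intCast_im, add_zero]
  linarith [neg_abs_le (2 * z.re * m)]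

end Cotangent

section TanhDerivatives

/-- The parametrized vertical line `x ↦ (1 + i x) / 2`, along which `cot (π z)` is
`-i tanh (π x / 2)`. It is written in the form `a * x + b` to which
`iteratedDeriv_comp_ofReal_affine` applies. -/
noncomputable def midline (x : ℝ) : ℂ := Complex.I / 2 * x + 1 / 2

lemma midline_eq_ofReal_add_ofReal_mul_I (x : ℝ) :
    midline x = (1 / 2 : ℝ) + (x / 2 : ℝ) * Complex.I := by
  rw [midline]
  push_cast
  ring

lemma re_midline (x : ℝ) : (midline x).re = 1 / 2 := by
  rw [midline_eq_ofReal_add_ofReal_mul_I, Complex.add_re, Complex.ofReal_re, Complex.re_ofReal_mul,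
    Complex.I_re, mul_zero, add_zero]

lemma im_midline (x : ℝ) : (midline x).im = x / 2 := by
  rw [midline_eq_ofReal_add_ofReal_mul_I, Complex.add_im, Complex.ofReal_im, Complex.im_ofReal_mul,
    Complex.I_im, zero_add, mul_one]

lemma norm_midline (x : ℝ) : ‖midline x‖ = √(1 + x ^ 2) / 2 := by
  rw [midline_eq_ofReal_add_ofReal_mul_I, Complex.norm_add_mul_I,
    show (1 / 2) ^ 2 + (x / 2) ^ 2 = (1 + x ^ 2) / 2 ^ 2 by ring, sqrt_div' _ (by positivity),
    sqrt_sq zero_le_two]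

lemma midline_mem_upperHalfPlaneSet {x : ℝ} (hx : 0 < x) : midline x ∈ upperHalfPlaneSet := by
  rw [upperHalfPlaneSet, Set.mem_ofPred_eq, im_midline]
  positivity

lemma cot_pi_mul_midline (x : ℝ) :
    Complex.cot (π * midline x) = -(tanh (π * x / 2) : ℂ) * Complex.I := by
  have harg : (π : ℂ) * midline x = (π * x / 2 : ℝ) * Complex.I + π / 2 := by
    rw [midline]
    push_cast
    ring
  rw [harg, Complex.cot, Complex.cos_add_pi_div_two, Complex.sin_add_pi_div_two, neg_div,
    ← Complex.tan_eq_sin_div_cos, Complex.tan_mul_I, Complex.ofReal_tanh, neg_mul]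

lemma tsum_one_div_norm_midline_add_intCast_sq {x : ℝ} (hx : 0 < x) :
    ∑' m : ℤ, 1 / ‖midline x + m‖ ^ 2 = 2 * π * (tanh (π * x / 2) / x) := by
  have hcot : (π * Complex.cot (π * midline x)).im = -(π * tanh (π * x / 2)) := by
    rw [cot_pi_mul_midline, Complex.im_ofReal_mul, ← Complex.ofReal_neg,
      Complex.im_ofReal_mul, Complex.I_im, mul_one, mul_neg]
  have hsum := im_pi_mul_cot_pi_mul_eq_tsum
    (coe_mem_integerComplement ⟨_, midline_mem_upperHalfPlaneSet hx⟩)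
  rw [coe_mk, hcot, im_midline] at hsum
  rw [← mul_div_assoc, eq_div_iff hx.ne']
  linarith

lemma contDiff_tanh_pi_mul_div_two {n : WithTop ℕ∞} :
    ContDiff ℝ n fun x : ℝ ↦ tanh (π * x / 2) :=
  contDiff_tanh.comp (by fun_prop)

lemma abs_iteratedDeriv_tanh_pi_mul_div_two (n : ℕ) {x : ℝ} (hx : 0 < x) :
    |iteratedDeriv n (fun y : ℝ ↦ tanh (π * y / 2)) x|
      = ‖iteratedDerivWithin n (fun z : ℂ ↦ π * Complex.cot (π * z)) upperHalfPlaneSet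
          (midline x)‖ / (π * 2 ^ n) := by
  have hcot : (fun y : ℝ ↦ (tanh (π * y / 2) : ℂ)) =
      fun y ↦ Complex.I / π * (π * Complex.cot (π * midline y)) := by
    funext y
    rw [cot_pi_mul_midline]
    field_simp
    rw [Complex.I_sq, mul_neg_one, neg_neg]
  have hchain : iteratedDeriv n (fun y : ℝ ↦ (π * Complex.cot (π * midline y) : ℂ)) x
      = (Complex.I / 2) ^ n • iteratedDerivWithin n (fun z : ℂ ↦ π * Complex.cot (π * z))
          upperHalfPlaneSet (midline x) :=
    iteratedDeriv_comp_ofReal_affine isOpen_upperHalfPlaneSet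
      differentiableOn_pi_mul_cot_pi_mul _ _ n (midline_mem_upperHalfPlaneSet hx)
  rw [← norm_iteratedDeriv_ofReal_comp contDiff_tanh_pi_mul_div_two.contDiffAt, hcot,
    iteratedDeriv_const_mul_field, hchain, norm_mul, norm_smul, norm_div, norm_pow, norm_div,
    Complex.norm_I, Complex.norm_ofNat, Complex.norm_real, norm_of_nonneg pi_pos.le, div_pow,
    one_pow]
  field_simp

lemma sqrt_pow_mul_abs_iteratedDeriv_succ_tanh_le (n : ℕ) {x : ℝ} (hx : 0 < x) :
    √(1 + x ^ 2) ^ n * |iteratedDeriv (n + 1) (fun y : ℝ ↦ tanh (π * y / 2)) x|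
      ≤ (n + 1)! * (tanh (π * x / 2) / x) := by
  have hcot := pow_mul_norm_iteratedDerivWithin_cot_le (midline_mem_upperHalfPlaneSet hx)
    (norm_nonneg _) (norm_le_norm_add_intCast (by rw [re_midline, abs_of_pos one_half_pos])) n
  rw [norm_midline, tsum_one_div_norm_midline_add_intCast_sq hx] at hcot
  rw [abs_iteratedDeriv_tanh_pi_mul_div_two _ hx]
  set D := ‖iteratedDerivWithin (n + 1) (fun z : ℂ ↦ π * Complex.cot (π * z)) upperHalfPlaneSet
    (midline x)‖
  calc √(1 + x ^ 2) ^ n * (D / (π * 2 ^ (n + 1)))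
      = (√(1 + x ^ 2) / 2) ^ n * D / (2 * π) := by
        rw [div_pow]
        field_simp
        ring
    _ ≤ (n + 1)! * (2 * π * (tanh (π * x / 2) / x)) / (2 * π) := by gcongr
    _ = (n + 1)! * (tanh (π * x / 2) / x) := by field_simp

lemma sqrt_pow_mul_abs_iteratedDeriv_tanh_le_of_pos (n : ℕ) {x : ℝ} (hx : 0 < x) :
    √(1 + x ^ 2) ^ n * |iteratedDeriv n (fun y : ℝ ↦ tanh (π * y / 2)) x|
      ≤ (1 + π / 2) * n ! := by
  cases n with
  | zero =>
    simpa using (abs_tanh_lt_one (π * x / 2)).le.trans (by linarith [pi_pos])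
  | succ n =>
    calc √(1 + x ^ 2) ^ (n + 1) * |iteratedDeriv (n + 1) (fun y : ℝ ↦ tanh (π * y / 2)) x|
        = √(1 + x ^ 2) * (√(1 + x ^ 2) ^ n *
            |iteratedDeriv (n + 1) (fun y : ℝ ↦ tanh (π * y / 2)) x|) := by ring
      _ ≤ √(1 + x ^ 2) * ((n + 1)! * (tanh (π * x / 2) / x)) := by
          gcongr ?_ * ?_
          exact sqrt_pow_mul_abs_iteratedDeriv_succ_tanh_le n hx
      _ = √(1 + x ^ 2) * (tanh (π / 2 * x) / x) * (n + 1)! := by ring_nf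
      _ ≤ (1 + π / 2) * (n + 1)! := by
          gcongr
          exact sqrt_one_add_sq_mul_tanh_div_le (by positivity) hx

end TanhDerivatives

/-- The iterated derivatives of `ξ ↦ tanh(πξ/2)` decay like `⟨ξ⟩^{−n}`
with factorial constants: there is `C > 0` with
`(1+ξ²)^{n/2} |dⁿ/dξⁿ tanh(πξ/2)| ≤ C·n!` for all `n` and `ξ`. -/
theorem tanh_iteratedDeriv_decay :
    ∃ C : ℝ, 0 < C ∧ ∀ (n : ℕ) (ξ : ℝ),
      (1 + ξ ^ 2) ^ ((n : ℝ) / 2) *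
          |iteratedDeriv n (fun x : ℝ => Real.tanh (Real.pi * x / 2)) ξ|
        ≤ C * (Nat.factorial n : ℝ) := by
  refine ⟨1 + π / 2, by positivity, fun n ξ ↦ ?_⟩
  have hcont : Continuous (iteratedDeriv n fun x : ℝ ↦ tanh (π * x / 2)) :=
    contDiff_tanh_pi_mul_div_two.continuous_iteratedDeriv n le_rfl
  have hodd : (fun x : ℝ ↦ tanh (π * x / 2)).Odd := fun x ↦ by
    simp only [mul_neg, neg_div, tanh_neg]
  have hnonneg : ∀ x : ℝ, 0 ≤ x → √(1 + x ^ 2) ^ n *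
      |iteratedDeriv n (fun x : ℝ ↦ tanh (π * x / 2)) x| ≤ (1 + π / 2) * n ! := fun x hx ↦
    le_on_closure (s := Set.Ioi (0 : ℝ))
      (fun y hy ↦ sqrt_pow_mul_abs_iteratedDeriv_tanh_le_of_pos n hy)
      (by fun_prop) continuousOn_const (by rwa [closure_Ioi])
  rw [rpow_div_two_eq_sqrt _ (by positivity), rpow_natCast]
  rcases le_total 0 ξ with hξ | hξ
  · exact hnonneg ξ hξ
  · have hneg := hnonneg (-ξ) (neg_nonneg.2 hξ)
    rwa [neg_sq, ← norm_eq_abs, norm_iteratedDeriv_neg_of_odd hodd] at hneg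
end

section
/- For every ξ ∈ ℝ, the series Σ_{k=1}^∞ 1/((2k−1)² + ξ²) converges and tanh(πξ/2) = (4ξ/π) · Σ_{k=1}^∞ 1/((2k−1)² + ξ²). -/
open Real

/-!
In `π cot (πz) = lim_N ∑_{|n| ≤ N} 1 / (z + n)` put `z = (1 - w) / 2`. The left side becomes
`π tan (πw / 2)`, and the poles of the right side move to the odd integers, where those at
`±(2k + 1)` combine to `4w / ((2k + 1)² - w²)`. This pairing leaves one unpaired term of each
partial sum, which tends to zero. Finally `w = iζ` turns the tangent into the hyperbolic tangent.
-/

open Filter Topology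

lemma summable_one_div_odd_sq_add {𝕜 : Type*} [RCLike 𝕜] (c : 𝕜) :
    Summable (fun k : ℕ => 1 / ((2 * k + 1 : 𝕜) ^ 2 + c)) := by
  refine Summable.of_norm_bounded_eventually_nat
    (Real.summable_one_div_nat_pow.mpr one_lt_two) ?_
  filter_upwards [eventually_ge_atTop ⌈‖c‖⌉₊, eventually_gt_atTop 0] with k hck hk
  have hc : ‖c‖ ≤ k := Nat.ceil_le.mp hck
  have hsq : ‖(2 * k + 1 : 𝕜) ^ 2‖ = (2 * k + 1 : ℝ) ^ 2 := by
    have h := RCLike.norm_natCast (K := 𝕜) (2 * k + 1)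
    push_cast at h
    rw [norm_pow, h]
  have hlower : (k : ℝ) ^ 2 ≤ ‖(2 * k + 1 : 𝕜) ^ 2 + c‖ := by
    have := norm_sub_le_norm_add ((2 * k + 1 : 𝕜) ^ 2) c
    nlinarith
  rw [norm_div, norm_one]
  exact one_div_le_one_div_of_le (by positivity) hlower

lemma tendsto_one_div_add_natCast_atTop {𝕜 : Type*} [NormedDivisionRing 𝕜]
    [NormSMulClass ℤ 𝕜] (z : 𝕜) :
    Tendsto (fun n : ℕ => 1 / (z + n)) atTop (𝓝 0) := by
  simp only [one_div]
  exact tendsto_inv₀_cobounded.comp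
    ((tendsto_const_add_cobounded z).comp tendsto_natCast_atTop_cobounded)

lemma one_sub_div_two_mem_integerComplement {w : ℂ} (hw : Complex.cos (π * w / 2) ≠ 0) :
    (1 - w) / 2 ∈ Complex.integerComplement := by
  rintro ⟨n, hn⟩
  refine Complex.cos_ne_zero_iff.mp hw (-n) ?_
  push_cast
  linear_combination (π : ℂ) * hn

lemma cotTerm_eq_add_one_div_sub {z : ℂ} (hz : z ∈ Complex.integerComplement) (n : ℕ) :
    cotTerm z n = 4 * (1 - 2 * z) / ((2 * n + 1) ^ 2 - (1 - 2 * z) ^ 2) +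
      (1 / (z + (n + 1 : ℕ)) - 1 / (z + n)) := by
  have hright : z + n ≠ 0 := mod_cast Complex.integerComplement_add_ne_zero hz n
  have hleft : z - (n + 1) ≠ 0 := by
    simpa [sub_eq_add_neg] using Complex.integerComplement_add_ne_zero hz (-(n + 1) : ℤ)
  have hpair : 1 / (z - (n + 1)) + 1 / (z + n) =
      4 * (1 - 2 * z) / ((2 * n + 1) ^ 2 - (1 - 2 * z) ^ 2) := by
    rw [show (2 * n + 1 : ℂ) ^ 2 - (1 - 2 * z) ^ 2 = -4 * ((z + n) * (z - (n + 1))) by ring]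
    field_simp
    ring
  rw [cotTerm, ← hpair]
  push_cast
  ring

theorem hasSum_pi_mul_tan_pi_mul_div_two {w : ℂ} (hw : Complex.cos (π * w / 2) ≠ 0) :
    HasSum (fun k : ℕ => 4 * w / ((2 * k + 1 : ℂ) ^ 2 - w ^ 2))
      (π * Complex.tan (π * w / 2)) := by
  obtain ⟨z, rfl⟩ : ∃ z, w = 1 - 2 * z := ⟨(1 - w) / 2, by ring⟩
  have hz : z ∈ Complex.integerComplement := by
    simpa using one_sub_div_two_mem_integerComplement hw
  have htan : Complex.cot (π * z) = Complex.tan (π * (1 - 2 * z) / 2) := by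
    rw [show π * z = π / 2 - π * (1 - 2 * z) / 2 by ring, ← Complex.tan_inv_eq_cot,
      Complex.tan_pi_div_two_sub, inv_inv]
  have hsummable : Summable (fun k : ℕ =>
      4 * (1 - 2 * z) / ((2 * k + 1 : ℂ) ^ 2 - (1 - 2 * z) ^ 2)) := by
    simpa only [mul_one_div, ← sub_eq_add_neg] using
      (summable_one_div_odd_sq_add (-(1 - 2 * z) ^ 2)).mul_left (4 * (1 - 2 * z))
  have hcot : Tendsto (fun N : ℕ => ∑ k ∈ Finset.range N, cotTerm z k) atTop
      (𝓝 (π * Complex.tan (π * (1 - 2 * z) / 2) - 1 / z)) := by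
    simpa only [htan] using tendsto_logDeriv_euler_cot_sub hz
  have htelescope : Tendsto (fun N : ℕ => 1 / (z + N) - 1 / z) atTop (𝓝 (0 - 1 / z)) :=
    (tendsto_one_div_add_natCast_atTop z).sub_const _
  rw [hsummable.hasSum_iff_tendsto_nat]
  convert! hcot.sub htelescope using 2 with N
  · simp only [cotTerm_eq_add_one_div_sub hz, Finset.sum_add_distrib,
      Finset.sum_range_sub (fun n : ℕ => 1 / (z + n))]
    simp
  · ring

theorem tanh_fractional_series_general {ζ : ℂ} (hζ : Complex.cosh (π * ζ / 2) ≠ 0) :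
    Summable (fun k : ℕ => 1 / ((2 * (k + 1) - 1 : ℂ) ^ 2 + ζ ^ 2)) ∧
    Complex.tanh (π * ζ / 2) =
      4 * ζ / π * ∑' k : ℕ, 1 / ((2 * (k + 1) - 1 : ℂ) ^ 2 + ζ ^ 2) := by
  have hodd (k : ℕ) : (2 * (k + 1) - 1 : ℂ) = 2 * k + 1 := by ring
  have hrotate : π * (ζ * Complex.I) / 2 = π * ζ / 2 * Complex.I := by ring
  have hcos : Complex.cos (π * (ζ * Complex.I) / 2) ≠ 0 := by
    rwa [hrotate, Complex.cos_mul_I]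
  have htan := (hasSum_pi_mul_tan_pi_mul_div_two hcos).tsum_eq
  simp only [div_eq_mul_one_div (4 * (ζ * Complex.I)), tsum_mul_left, hrotate, Complex.tan_mul_I,
    mul_pow, Complex.I_sq, mul_neg_one, sub_neg_eq_add] at htan
  simp only [hodd]
  refine ⟨summable_one_div_odd_sq_add (ζ ^ 2), ?_⟩
  have hπ : (π : ℂ) ≠ 0 := Complex.ofReal_ne_zero.mpr pi_ne_zero
  field_simp
  exact mul_right_cancel₀ Complex.I_ne_zero (by linear_combination -htan)

/-- Fractional series expansion of the hyperbolic tangent: for every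
`ξ ∈ ℝ`, the series `Σ_{k≥1} 1/((2k−1)² + ξ²)` converges and
`tanh(πξ/2) = (4ξ/π) Σ_{k≥1} 1/((2k−1)² + ξ²)`. -/
theorem tanh_fractional_series (ξ : ℝ) :
    Summable (fun k : ℕ => 1 / (((2 * (k + 1) - 1 : ℝ)) ^ 2 + ξ ^ 2)) ∧
    Real.tanh (Real.pi * ξ / 2)
      = (4 * ξ / Real.pi) *
        ∑' k : ℕ, 1 / (((2 * (k + 1) - 1 : ℝ)) ^ 2 + ξ ^ 2) := by
  have hcosh : Complex.cosh (π * ξ / 2) ≠ 0 := by exact_mod_cast (cosh_pos (π * ξ / 2)).ne'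
  exact_mod_cast tanh_fractional_series_general hcosh
end

section
/- For every n ∈ ℕ and every ξ ∈ ℝ, the n-th derivative of ξ ↦ tanh(πξ/2) satisfies dⁿ/dξⁿ [tanh(πξ/2)] = (−1)ⁿ · n! · (2/π) · Σ_{k=1}^∞ [ (ξ + i(2k−1))^{−(n+1)} + (ξ − i(2k−1))^{−(n+1)} ], where the series on the right converges (in ℂ) and its sum is real. -/
open Real Complex

/-!
Shifting the Mittag-Leffler expansion of the cotangent by one half gives that of the tangent;
restricted to the imaginary axis it says that `tanh (π x / 2)` is `2 / π` times the sum of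
`(x + ib)⁻¹ + (x - ib)⁻¹` over the odd `b > 0`. This series may be differentiated termwise any
number of times: every derivative has terms of size `O(b⁻²)` uniformly in `x`, and the
undifferentiated series, whose terms are not uniformly summable, vanishes term by term at `x = 0`.
-/

open Filter Topology

section MittagLeffler

theorem tendsto_sum_range_cot_pi_mul {w : ℂ} (hw : w ∈ integerComplement) :
    Tendsto (fun N : ℕ => ∑ k ∈ Finset.range N, (1 / (w + k) + 1 / (w - (k + 1)))) atTop
      (𝓝 (π * cot (π * w))) := by
  have partial_sum (N : ℕ) : ∑ k ∈ Finset.range N, (1 / (w + k) + 1 / (w - (k + 1))) =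
      ∑ k ∈ Finset.range N, cotTerm w k + 1 / w - 1 / (w + N) := by
    induction N with
    | zero => simp
    | succ N ih =>
      rw [Finset.sum_range_succ, Finset.sum_range_succ, ih]
      push_cast
      ring
  have tail : Tendsto (fun N : ℕ => 1 / (w + N)) atTop (𝓝 0) := by
    simpa using EisensteinSeries.tendsto_zero_inv_linear w 1
  simpa only [partial_sum, sub_add_cancel, sub_zero] using
    ((tendsto_logDeriv_euler_cot_sub hw).add_const (1 / w)).sub tail

theorem summable_one_div_add_nat_add_one_div_sub_succ {w : ℂ} (hw : w ∈ integerComplement) :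
    Summable fun k : ℕ => 1 / (w + k) + 1 / (w - (k + 1)) := by
  have shift : Summable fun k : ℕ => ((w + k + 1) * (w + k))⁻¹ := by
    simpa [Function.comp_def] using
      (EisensteinSeries.summable_linear_right_add_one_mul_linear_right w 1 1).comp_injective
        Nat.cast_injective
  refine ((summable_cotTerm hw).add shift).congr fun k => ?_
  have h₀ : w + k ≠ 0 := mod_cast integerComplement_add_ne_zero hw k
  have h₁ : w + k + 1 ≠ 0 := by
    simpa [add_assoc] using integerComplement_add_ne_zero hw (k + 1)
  have partial_fractions : ((w + k + 1) * (w + k))⁻¹ = 1 / (w + k) - 1 / (w + k + 1) := by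
    field
  rw [partial_fractions, cotTerm]
  ring

theorem hasSum_cot_pi_mul {w : ℂ} (hw : w ∈ integerComplement) :
    HasSum (fun k : ℕ => 1 / (w + k) + 1 / (w - (k + 1))) (π * cot (π * w)) :=
  (summable_one_div_add_nat_add_one_div_sub_succ hw).hasSum_iff_tendsto_nat.2
    (tendsto_sum_range_cot_pi_mul hw)

theorem cot_add_pi_div_two (z : ℂ) : cot (z + π / 2) = -tan z := by
  rw [Complex.cot, Complex.cos_add_pi_div_two, Complex.sin_add_pi_div_two, Complex.tan, neg_div]

theorem hasSum_tan_pi_mul {z : ℂ} (hz : z + 1 / 2 ∈ integerComplement) :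
    HasSum (fun k : ℕ => 1 / (z + (k + 1 / 2)) + 1 / (z - (k + 1 / 2))) (-(π * tan (π * z))) := by
  convert hasSum_cot_pi_mul hz using 1
  · ext k
    ring_nf
  · rw [mul_add, mul_one_div, cot_add_pi_div_two, mul_neg]

end MittagLeffler

theorem summable_pow_of_le {ι : Type*} {u : ι → ℝ} {p q : ℕ} (hu : ∀ k, 0 ≤ u k) (hp : p ≠ 0)
    (hpq : p ≤ q) (h : Summable fun k => u k ^ p) : Summable fun k => u k ^ q := by
  refine h.of_norm_bounded_eventually ?_
  filter_upwards [h.tendsto_cofinite_zero.eventually_le_const one_pos] with k hk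
  rw [Real.norm_of_nonneg (pow_nonneg (hu k) q)]
  exact pow_le_pow_of_le_one (hu k) ((pow_le_one_iff_of_nonneg (hu k) hp).1 hk) hpq

/-- The contribution `(x + ib)⁻⁽ⁿ⁺¹⁾ + (x - ib)⁻⁽ⁿ⁺¹⁾` of the conjugate poles `± ib`, encoded as
twice a real part so that it is real by construction. -/
noncomputable def conjPolePair (b : ℝ) (n : ℕ) (x : ℝ) : ℝ :=
  2 * (((x : ℂ) + I * b) ^ (-((n : ℤ) + 1))).re

theorem ofReal_conjPolePair (b : ℝ) (n : ℕ) (x : ℝ) :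
    (conjPolePair b n x : ℂ) =
      ((x : ℂ) + I * b) ^ (-((n : ℤ) + 1)) + ((x : ℂ) - I * b) ^ (-((n : ℤ) + 1)) := by
  rw [conjPolePair, ← add_conj]
  simp [sub_eq_add_neg]

theorem conjPolePair_zero_zero (b : ℝ) : conjPolePair b 0 0 = 0 := by
  simp [conjPolePair]

section SinglePair

variable {b : ℝ}

theorem abs_conjPolePair_le (hb : b ≠ 0) (n : ℕ) (x : ℝ) :
    |conjPolePair b n x| ≤ 2 * |b|⁻¹ ^ (n + 1) := by
  have distance_to_pole : |b| ≤ ‖(x : ℂ) + I * b‖ := by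
    simpa using abs_im_le_norm ((x : ℂ) + I * b)
  calc |conjPolePair b n x|
      = 2 * |(((x : ℂ) + I * b) ^ (-((n : ℤ) + 1))).re| := by simp [conjPolePair, abs_mul]
    _ ≤ 2 * ‖((x : ℂ) + I * b) ^ (-((n : ℤ) + 1))‖ := by gcongr; exact abs_re_le_norm _
    _ = 2 * ‖(x : ℂ) + I * b‖⁻¹ ^ (n + 1) := by
      rw [norm_zpow, zpow_neg, inv_pow]
      norm_cast
    _ ≤ 2 * |b|⁻¹ ^ (n + 1) := by gcongr

theorem hasDerivAt_conjPolePair (hb : b ≠ 0) (n : ℕ) (x : ℝ) :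
    HasDerivAt (conjPolePair b n) (-(n + 1) * conjPolePair b (n + 1) x) x := by
  have ne_pole : (x : ℂ) + I * b ≠ 0 := fun h => hb (by simpa using congrArg Complex.im h)
  have complex_deriv : HasDerivAt (fun z : ℂ => (z + I * b) ^ (-((n : ℤ) + 1)))
      (((-(n + 1) : ℝ) : ℂ) * ((x : ℂ) + I * b) ^ (-(((n + 1 : ℕ) : ℤ) + 1))) x := by
    refine ((hasDerivAt_zpow (-((n : ℤ) + 1)) _ (Or.inl ne_pole)).comp_add_const
      (x : ℂ) _).congr_deriv ?_
    rw [show -((n : ℤ) + 1) - 1 = -(((n + 1 : ℕ) : ℤ) + 1) by push_cast; ring]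
    push_cast
    rfl
  refine (complex_deriv.real_of_complex.const_mul 2).congr_deriv ?_
  rw [re_ofReal_mul, conjPolePair]
  ring

theorem norm_deriv_conjPolePair_le (hb : b ≠ 0) (n : ℕ) (x : ℝ) :
    ‖-(n + 1) * conjPolePair b (n + 1) x‖ ≤ (n + 1) * (2 * |b|⁻¹ ^ (n + 1 + 1)) := by
  rw [norm_mul, norm_neg, Real.norm_of_nonneg (by positivity)]
  gcongr
  exact abs_conjPolePair_le hb (n + 1) x

end SinglePair

section Series

variable {ι : Type*} {b : ι → ℝ}

theorem summable_bound_conjPolePair_succ (hsum : Summable fun k => |b k|⁻¹ ^ 2) (n : ℕ) :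
    Summable fun k => 2 * |b k|⁻¹ ^ (n + 1 + 1) :=
  (summable_pow_of_le (fun k => by positivity) two_ne_zero (by lia) hsum).mul_left 2

theorem summable_bound_deriv_conjPolePair (hsum : Summable fun k => |b k|⁻¹ ^ 2) (n : ℕ) :
    Summable fun k => (n + 1) * (2 * |b k|⁻¹ ^ (n + 1 + 1)) :=
  (summable_bound_conjPolePair_succ hsum n).mul_left _

theorem summable_conjPolePair (hb : ∀ k, b k ≠ 0) (hsum : Summable fun k => |b k|⁻¹ ^ 2)
    (n : ℕ) (x : ℝ) : Summable fun k => conjPolePair (b k) n x := by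
  cases n with
  | zero =>
    exact summable_of_summable_hasDerivAt (y₀ := 0) (summable_bound_deriv_conjPolePair hsum 0)
      (fun k => hasDerivAt_conjPolePair (hb k) 0) (fun k => norm_deriv_conjPolePair_le (hb k) 0)
      (by simp only [conjPolePair_zero_zero, summable_zero]) x
  | succ n =>
    exact .of_norm_bounded (summable_bound_conjPolePair_succ hsum n) fun k =>
      abs_conjPolePair_le (hb k) (n + 1) x

theorem hasDerivAt_tsum_conjPolePair (hb : ∀ k, b k ≠ 0) (hsum : Summable fun k => |b k|⁻¹ ^ 2)
    (n : ℕ) (x : ℝ) :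
    HasDerivAt (fun y => ∑' k, conjPolePair (b k) n y)
      (-(n + 1) * ∑' k, conjPolePair (b k) (n + 1) x) x := by
  rw [← tsum_mul_left]
  exact hasDerivAt_tsum (summable_bound_deriv_conjPolePair hsum n)
    (fun k => hasDerivAt_conjPolePair (hb k) n) (fun k => norm_deriv_conjPolePair_le (hb k) n)
    (summable_conjPolePair hb hsum n 0) x

theorem iteratedDeriv_tsum_conjPolePair (hb : ∀ k, b k ≠ 0)
    (hsum : Summable fun k => |b k|⁻¹ ^ 2) (n : ℕ) :
    iteratedDeriv n (fun x => ∑' k, conjPolePair (b k) 0 x) =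
      fun x => (-1) ^ n * n.factorial * ∑' k, conjPolePair (b k) n x := by
  induction n with
  | zero => simp
  | succ n ih =>
    ext x
    rw [iteratedDeriv_succ, ih,
      ((hasDerivAt_tsum_conjPolePair hb hsum n x).const_mul _).deriv, Nat.factorial_succ]
    push_cast
    ring

end Series

section OddPoles

theorem odd_pole_ne_zero (k : ℕ) : (2 * k + 1 : ℝ) ≠ 0 := by positivity

theorem summable_inv_odd_sq : Summable fun k : ℕ => |(2 * k + 1 : ℝ)|⁻¹ ^ 2 := by
  have inv_sq : Summable fun m : ℕ => |(m : ℝ)|⁻¹ ^ 2 := by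
    simp
  have odd_injective : Function.Injective fun k : ℕ => 2 * k + 1 := fun _ _ h => by lia
  simpa [Function.comp_def] using inv_sq.comp_injective odd_injective

theorem I_mul_div_two_add_half_mem_integerComplement (x : ℝ) :
    I * x / 2 + 1 / 2 ∈ integerComplement := by
  rintro ⟨m, hm⟩
  have re_eq : (m : ℝ) = 1 / 2 := by simpa using congrArg Complex.re hm
  have : 2 * m = 1 := by
    have : (2 * m : ℝ) = 1 := by linarith
    exact_mod_cast this
  lia

theorem tanh_eq_tsum_conjPolePair (x : ℝ) :
    Real.tanh (π * x / 2) = 2 / π * ∑' k : ℕ, conjPolePair (2 * k + 1) 0 x := by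
  have tan_eq : tan (π * (I * x / 2)) = (Real.tanh (π * x / 2) : ℂ) * I := by
    rw [show (π : ℂ) * (I * x / 2) = (π * x / 2 : ℝ) * I by push_cast; ring, tan_mul_I,
      ofReal_tanh]
  have term_eq (k : ℕ) : 1 / (I * x / 2 + (k + 1 / 2)) + 1 / (I * x / 2 - (k + 1 / 2)) =
      -(2 * I) * (conjPolePair (2 * k + 1) 0 x : ℂ) := by
    have h₁ : I * x / 2 + (k + 1 / 2) = I / 2 * (x - I * (2 * k + 1 : ℝ)) := by
      push_cast
      linear_combination ((2 * k + 1) / 2 : ℂ) * I_sq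
    have h₂ : I * x / 2 - (k + 1 / 2) = I / 2 * (x + I * (2 * k + 1 : ℝ)) := by
      push_cast
      linear_combination (-(2 * k + 1) / 2 : ℂ) * I_sq
    rw [h₁, h₂, ofReal_conjPolePair]
    simp only [one_div, mul_inv, inv_div, div_I, Nat.cast_zero, zero_add, zpow_neg_one]
    ring
  have series := (hasSum_tan_pi_mul (I_mul_div_two_add_half_mem_integerComplement x)).tsum_eq
  simp only [term_eq, tsum_mul_left, tan_eq, ← ofReal_tsum] at series
  have real_series : 2 * ∑' k : ℕ, conjPolePair (2 * k + 1) 0 x = π * Real.tanh (π * x / 2) := by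
    simpa [-ofReal_tanh] using congrArg Complex.im series
  rw [div_mul_eq_mul_div, real_series, mul_div_cancel_left₀ _ Real.pi_ne_zero]

theorem iteratedDeriv_tanh_pi_mul_div_two (n : ℕ) (x : ℝ) :
    iteratedDeriv n (fun y : ℝ => Real.tanh (π * y / 2)) x =
      (-1) ^ n * n.factorial * (2 / π) * ∑' k : ℕ, conjPolePair (2 * k + 1) n x := by
  simp only [tanh_eq_tsum_conjPolePair]
  rw [iteratedDeriv_const_mul_field,
    iteratedDeriv_tsum_conjPolePair odd_pole_ne_zero summable_inv_odd_sq]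
  ring

end OddPoles

/-- Series representation of the derivatives of `tanh(πξ/2)`:
for every `n` and real `ξ`, the series
`Σ_{k≥1} [(ξ + i(2k−1))^{−(n+1)} + (ξ − i(2k−1))^{−(n+1)}]` converges in `ℂ`, its sum is
real, and
`dⁿ/dξⁿ tanh(πξ/2) = (−1)ⁿ n! (2/π) Σ_{k≥1} [(ξ+i(2k−1))^{−(n+1)} + (ξ−i(2k−1))^{−(n+1)}]`. -/
theorem tanh_iteratedDeriv_series (n : ℕ) (ξ : ℝ) :
    Summable (fun k : ℕ =>
      ((ξ : ℂ) + Complex.I * (2 * (k + 1) - 1)) ^ (-((n : ℤ) + 1)) +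
      ((ξ : ℂ) - Complex.I * (2 * (k + 1) - 1)) ^ (-((n : ℤ) + 1))) ∧
    (∑' k : ℕ,
        (((ξ : ℂ) + Complex.I * (2 * (k + 1) - 1)) ^ (-((n : ℤ) + 1)) +
         ((ξ : ℂ) - Complex.I * (2 * (k + 1) - 1)) ^ (-((n : ℤ) + 1)))).im = 0 ∧
    ((iteratedDeriv n (fun x : ℝ => Real.tanh (Real.pi * x / 2)) ξ : ℝ) : ℂ)
      = (-1) ^ n * (Nat.factorial n : ℂ) * (2 / Real.pi) *
        ∑' k : ℕ,
          (((ξ : ℂ) + Complex.I * (2 * (k + 1) - 1)) ^ (-((n : ℤ) + 1)) +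
           ((ξ : ℂ) - Complex.I * (2 * (k + 1) - 1)) ^ (-((n : ℤ) + 1))) := by
  have term_eq (k : ℕ) :
      ((ξ : ℂ) + Complex.I * (2 * (k + 1) - 1)) ^ (-((n : ℤ) + 1)) +
        ((ξ : ℂ) - Complex.I * (2 * (k + 1) - 1)) ^ (-((n : ℤ) + 1)) =
      (conjPolePair (2 * k + 1) n ξ : ℂ) := by
    rw [ofReal_conjPolePair, show (2 * (k + 1) - 1 : ℂ) = (2 * k + 1 : ℝ) by push_cast; ring]
  simp only [term_eq, ← ofReal_tsum, summable_ofReal]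
  refine ⟨summable_conjPolePair odd_pole_ne_zero summable_inv_odd_sq n ξ, ofReal_im _, ?_⟩
  exact_mod_cast congrArg ofReal (iteratedDeriv_tanh_pi_mul_div_two n ξ)
end

section
/- For every ξ ∈ ℝ with ξ ≠ 0, the series Σ_{k=1}^∞ 1/(4k² + ξ²) converges and coth(πξ/2) − 2/(πξ) = (4ξ/π) · Σ_{k=1}^∞ 1/(4k² + ξ²). -/
open Real

/-!
The partial fraction expansion `π cot (πw) - 1/w = ∑ (1/(w - m) + 1/(w + m))` over `m ≥ 1`, taken
at `w = z * I`, becomes the expansion of `π coth (πz) - 1/z` once the common factor `-I` is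
cancelled; the substitution `z = ξ / 2` then gives the series in `4 * m ^ 2 + ξ ^ 2`.
-/

section CothExpansion

variable {z : ℂ}

lemma cot_mul_I (w : ℂ) :
    Complex.cot (w * Complex.I) = -Complex.I * (Complex.cosh w / Complex.sinh w) := by
  rw [Complex.cot, Complex.cos_mul_I, Complex.sin_mul_I, ← div_div, Complex.div_I]
  ring

lemma mul_I_mem_integerComplement (hz : ∀ n : ℤ, z ≠ n * Complex.I) :
    z * Complex.I ∈ Complex.integerComplement := by
  rintro ⟨n, hn⟩
  apply hz (-n)
  push_cast
  linear_combination Complex.I * hn + z * Complex.I_sq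

lemma cotTerm_mul_I (hz : z * Complex.I ∈ Complex.integerComplement) (n : ℕ) :
    cotTerm (z * Complex.I) n = -Complex.I * (2 * z / ((n + 1) ^ 2 + z ^ 2)) := by
  have factor_eq : (z * Complex.I + (n + 1)) * (z * Complex.I - (n + 1)) =
      -((n + 1) ^ 2 + z ^ 2) := by
    linear_combination z ^ 2 * Complex.I_sq
  rw [cotTerm_identity hz, factor_eq, one_div, inv_neg]
  ring

theorem hasSum_pi_mul_coth_sub_inv (hz : ∀ n : ℤ, z ≠ n * Complex.I) :
    HasSum (fun n : ℕ ↦ 2 * z / ((n + 1) ^ 2 + z ^ 2))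
      (π * (Complex.cosh (π * z) / Complex.sinh (π * z)) - 1 / z) := by
  have hzI := mul_I_mem_integerComplement hz
  have value_eq : π * Complex.cot (π * (z * Complex.I)) - 1 / (z * Complex.I) =
      -Complex.I * (π * (Complex.cosh (π * z) / Complex.sinh (π * z)) - 1 / z) := by
    rw [← mul_assoc (π : ℂ), cot_mul_I, ← div_div, Complex.div_I]
    ring
  have cot_hasSum : HasSum (cotTerm (z * Complex.I))
      (π * Complex.cot (π * (z * Complex.I)) - 1 / (z * Complex.I)) :=
    cot_series_rep' hzI ▸ (summable_cotTerm hzI).hasSum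
  rw [value_eq, funext (cotTerm_mul_I hzI)] at cot_hasSum
  exact (hasSum_mul_left_iff (neg_ne_zero.mpr Complex.I_ne_zero)).mp cot_hasSum

theorem coth_fractional_series_general {ξ : ℂ} (hξ : ∀ n : ℤ, ξ ≠ 2 * n * Complex.I) :
    Summable (fun k : ℕ ↦ 1 / (4 * (k + 1 : ℂ) ^ 2 + ξ ^ 2)) ∧
    Complex.cosh (π * ξ / 2) / Complex.sinh (π * ξ / 2) - 2 / (π * ξ) =
      4 * ξ / π * ∑' k : ℕ, 1 / (4 * (k + 1 : ℂ) ^ 2 + ξ ^ 2) := by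
  have ξ_ne_zero : ξ ≠ 0 := by simpa using hξ 0
  have pi_ne_zero : (π : ℂ) ≠ 0 := Complex.ofReal_ne_zero.mpr Real.pi_ne_zero
  have half_ne (n : ℤ) : ξ / 2 ≠ n * Complex.I := fun h ↦ hξ n (by linear_combination 2 * h)
  have term_eq (k : ℕ) : 2 * (ξ / 2) / ((k + 1) ^ 2 + (ξ / 2) ^ 2) =
      4 * ξ * (1 / (4 * (k + 1 : ℂ) ^ 2 + ξ ^ 2)) := by
    rw [show (k + 1 : ℂ) ^ 2 + (ξ / 2) ^ 2 = (4 * (k + 1) ^ 2 + ξ ^ 2) / 4 by ring,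
      div_div_eq_mul_div]
    ring
  have coth_hasSum := hasSum_pi_mul_coth_sub_inv half_ne
  rw [funext term_eq, ← mul_div_assoc] at coth_hasSum
  have four_mul_ne_zero : 4 * ξ ≠ 0 := mul_ne_zero (by norm_num) ξ_ne_zero
  refine ⟨(summable_mul_left_iff four_mul_ne_zero).mp coth_hasSum.summable, ?_⟩
  rw [div_mul_eq_mul_div, ← tsum_mul_left, coth_hasSum.tsum_eq]
  field_simp

end CothExpansion

/-- Fractional series expansion of the hyperbolic cotangent: for every
`ξ ≠ 0`, the series `Σ_{k≥1} 1/(4k² + ξ²)` converges and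
`coth(πξ/2) − 2/(πξ) = (4ξ/π) Σ_{k≥1} 1/(4k² + ξ²)`, where `coth x = cosh x / sinh x`. -/
theorem coth_fractional_series (ξ : ℝ) (hξ : ξ ≠ 0) :
    Summable (fun k : ℕ => 1 / (4 * ((k + 1 : ℝ)) ^ 2 + ξ ^ 2)) ∧
    Real.cosh (Real.pi * ξ / 2) / Real.sinh (Real.pi * ξ / 2) - 2 / (Real.pi * ξ)
      = (4 * ξ / Real.pi) * ∑' k : ℕ, 1 / (4 * ((k + 1 : ℝ)) ^ 2 + ξ ^ 2) := by
  exact_mod_cast coth_fractional_series_general (ξ := ξ)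
    fun n h ↦ hξ (by simpa using congrArg Complex.re h)
end

section
/- Let μ ∈ (0,1], δ > 0, M > 0 and ε ∈ (0,1). Let κ : [−δ,δ] → ℝ be differentiable with κ(0) = κ′(0) = 0, twice differentiable on [−δ,δ]\{0}, and suppose |κ″(x)| ≤ M|x|^{μ−1} for all x ∈ [−δ,δ]\{0}. Set z(x) = x + iκ(x) ∈ ℂ. Then there exists a constant C > 0, depending only on M, ε and μ, such that for every x ∈ (0,δ] and every u ∈ [(1−ε)x, (1+ε)x] ∩ [−δ,δ] with u ≠ x, | (1 + iκ′(x)) / (z(x) − z(u)) − 1/(x−u) | ≤ C x^{μ−1}. (This is the near-diagonal kernel estimate for the Cauchy kernel on one branch of a curve near a cusp: the Birkhoff–Rott kernel equals the Hilbert-transform kernel plus an error of size O(x^{μ−1}).) -/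
open Real Set Complex

/-!
Write `w = z x - z u` and `d = x - u`. Then `z' x / w - 1 / d = (d * z' x - w) / (w * d)`: the
numerator is a second-order Taylor remainder, at most `d ^ 2` times a bound for `z''` between `u`
and `x`, while the real part of `w` is `d`, so `|d| ≤ ‖w‖`. On the window
`[(1 - ε) x, (1 + ε) x]` every point is comparable to `x`, which bounds `z''` by a multiple of
`x ^ (μ - 1)`.
-/

theorem rpow_le_max_mul_rpow_of_mem_Icc {a b x y : ℝ} (p : ℝ) (ha : 0 < a) (hx : 0 < x)
    (hy : y ∈ Icc (a * x) (b * x)) : y ^ p ≤ max (a ^ p) (b ^ p) * x ^ p := by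
  have hax : 0 < a * x := mul_pos ha hx
  have hy_pos : 0 < y := hax.trans_le hy.1
  have hb : 0 < b := pos_of_mul_pos_left (hy_pos.trans_le hy.2) hx.le
  rcases le_total p 0 with hp | hp
  · calc y ^ p ≤ (a * x) ^ p := rpow_le_rpow_of_nonpos hax hy.1 hp
      _ = a ^ p * x ^ p := mul_rpow ha.le hx.le
      _ ≤ max (a ^ p) (b ^ p) * x ^ p := by gcongr; exact le_max_left _ _
  · calc y ^ p ≤ (b * x) ^ p := rpow_le_rpow hy_pos.le hy.2 hp
      _ = b ^ p * x ^ p := mul_rpow hb.le hx.le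
      _ ≤ max (a ^ p) (b ^ p) * x ^ p := by gcongr; exact le_max_right _ _

theorem norm_image_sub_sub_smul_le_of_norm_hasDerivWithin_le {𝕜 G : Type*} [RCLike 𝕜]
    [NormedAddCommGroup G] [NormedSpace 𝕜 G] {f f' f'' : 𝕜 → G} {s : Set 𝕜} {K : ℝ} {x y : 𝕜}
    (hs : Convex ℝ s) (hf : ∀ t ∈ s, HasDerivWithinAt f (f' t) s t)
    (hf' : ∀ t ∈ s, HasDerivWithinAt f' (f'' t) s t) (hK : ∀ t ∈ s, ‖f'' t‖ ≤ K)
    (hx : x ∈ s) (hy : y ∈ s) :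
    ‖f y - f x - (y - x) • f' x‖ ≤ K * ‖y - x‖ ^ 2 := by
  have hK_nonneg : 0 ≤ K := (norm_nonneg _).trans (hK x hx)
  have hseg : segment ℝ x y ⊆ s := hs.segment_subset hx hy
  have hf'_sub (t) (ht : t ∈ segment ℝ x y) : ‖f' t - f' x‖ ≤ K * ‖y - x‖ :=
    calc ‖f' t - f' x‖ ≤ K * ‖t - x‖ :=
          hs.norm_image_sub_le_of_norm_hasDerivWithin_le hf' hK hx (hseg ht)
      _ ≤ K * ‖y - x‖ := by gcongr; exact norm_sub_le_of_mem_segment ht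
  have hg (t) (ht : t ∈ segment ℝ x y) :
      HasDerivWithinAt (fun t ↦ f t - t • f' x) (f' t - f' x) (segment ℝ x y) t := by
    simpa only [id, one_smul] using
      ((hf t (hseg ht)).mono hseg).fun_sub ((hasDerivWithinAt_id t _).smul_const (f' x))
  calc ‖f y - f x - (y - x) • f' x‖ = ‖(f y - y • f' x) - (f x - x • f' x)‖ := by
        congr 1; module
    _ ≤ K * ‖y - x‖ * ‖y - x‖ :=
        (convex_segment x y).norm_image_sub_le_of_norm_hasDerivWithin_le hg hf'_sub
          (left_mem_segment ℝ x y) (right_mem_segment ℝ x y)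
    _ = K * ‖y - x‖ ^ 2 := by ring

theorem norm_div_sub_one_div_le {𝕜 : Type*} [NormedField 𝕜] {a d w : 𝕜} {c K : ℝ}
    (hc : 0 < c) (hd : d ≠ 0) (hdw : c * ‖d‖ ≤ ‖w‖) (h : ‖d * a - w‖ ≤ K * ‖d‖ ^ 2) :
    ‖a / w - 1 / d‖ ≤ K / c := by
  have hd_pos : 0 < ‖d‖ := norm_pos_iff.2 hd
  have hw_pos : 0 < ‖w‖ := (mul_pos hc hd_pos).trans_le hdw
  have hK : 0 ≤ K := nonneg_of_mul_nonneg_left ((norm_nonneg _).trans h) (by positivity)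
  calc ‖a / w - 1 / d‖ = ‖d * a - w‖ / (‖w‖ * ‖d‖) := by
        rw [div_sub_div _ _ (norm_pos_iff.1 hw_pos) hd, mul_one, mul_comm a, norm_div, norm_mul]
    _ ≤ K * ‖d‖ ^ 2 / (c * ‖d‖ * ‖d‖) := by gcongr
    _ = K / c := by field_simp

theorem norm_cauchyKernel_sub_hilbertKernel_le {z z' z'' : ℝ → ℂ} {s : Set ℝ} {c K x u : ℝ}
    (hs : Convex ℝ s) (hz : ∀ t ∈ s, HasDerivWithinAt z (z' t) s t)
    (hz' : ∀ t ∈ s, HasDerivWithinAt z' (z'' t) s t) (hK : ∀ t ∈ s, ‖z'' t‖ ≤ K)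
    (hx : x ∈ s) (hu : u ∈ s) (hux : u ≠ x) (hc : 0 < c)
    (hchord : c * |x - u| ≤ ‖z x - z u‖) :
    ‖z' x / (z x - z u) - 1 / ((x : ℂ) - u)‖ ≤ K / c := by
  have hnorm : ‖(x : ℂ) - u‖ = |x - u| := by rw [← ofReal_sub, norm_real, norm_eq_abs]
  refine norm_div_sub_one_div_le hc (sub_ne_zero.2 (ofReal_injective.ne hux.symm))
    (hnorm ▸ hchord) ?_
  calc ‖((x : ℂ) - u) * z' x - (z x - z u)‖ = ‖z u - z x - (u - x) • z' x‖ := by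
        congr 1; rw [real_smul, ofReal_sub]; ring
    _ ≤ K * ‖u - x‖ ^ 2 :=
        norm_image_sub_sub_smul_le_of_norm_hasDerivWithin_le hs hz hz' hK hx hu
    _ = K * ‖(x : ℂ) - u‖ ^ 2 := by rw [hnorm, norm_sub_rev, norm_eq_abs]

theorem norm_graph_cauchyKernel_sub_hilbertKernel_le {κ κ' κ'' : ℝ → ℝ} {s : Set ℝ} {K x u : ℝ}
    (hs : Convex ℝ s) (hκ : ∀ t ∈ s, HasDerivWithinAt κ (κ' t) s t)
    (hκ' : ∀ t ∈ s, HasDerivWithinAt κ' (κ'' t) s t) (hK : ∀ t ∈ s, |κ'' t| ≤ K)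
    (hx : x ∈ s) (hu : u ∈ s) (hux : u ≠ x) :
    ‖(1 + I * κ' x) / ((x + I * κ x) - (u + I * κ u)) - 1 / ((x : ℂ) - u)‖ ≤ K := by
  have hz (t) (ht : t ∈ s) :
      HasDerivWithinAt (fun t : ℝ ↦ (t + I * κ t : ℂ)) (1 + I * κ' t) s t := by
    simpa only [id, ofReal_one] using
      (hasDerivWithinAt_id t s).ofReal_comp.fun_add ((hκ t ht).ofReal_comp.const_mul I)
  have hz' (t) (ht : t ∈ s) :
      HasDerivWithinAt (fun t : ℝ ↦ (1 + I * κ' t : ℂ)) (I * κ'' t) s t :=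
    ((hκ' t ht).ofReal_comp.const_mul I).const_add 1
  have hz''_le (t) (ht : t ∈ s) : ‖I * (κ'' t : ℂ)‖ ≤ K := by
    simpa only [norm_mul, norm_I, one_mul, norm_real, norm_eq_abs] using hK t ht
  have hchord : 1 * |x - u| ≤ ‖(x + I * κ x : ℂ) - (u + I * κ u)‖ := by
    simpa using abs_re_le_norm ((x + I * κ x : ℂ) - (u + I * κ u))
  simpa only [div_one] using
    norm_cauchyKernel_sub_hilbertKernel_le hs hz hz' hz''_le hx hu hux one_pos hchord

theorem near_diagonal_kernel_estimate_general {μ M ε δ : ℝ} {κ κ' κ'' : ℝ → ℝ} (hε : ε < 1)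
    (hκ : ∀ t ∈ Ioc 0 δ, HasDerivWithinAt κ (κ' t) (Ioc 0 δ) t)
    (hκ' : ∀ t ∈ Ioc 0 δ, HasDerivWithinAt κ' (κ'' t) (Ioc 0 δ) t)
    (hκ'' : ∀ t ∈ Ioc 0 δ, |κ'' t| ≤ M * t ^ (μ - 1)) {x u : ℝ} (hx : x ∈ Ioc 0 δ)
    (hu : u ∈ Icc ((1 - ε) * x) ((1 + ε) * x)) (huδ : u ≤ δ) (hux : u ≠ x) :
    ‖(1 + I * κ' x) / ((x + I * κ x) - (u + I * κ u)) - 1 / ((x : ℂ) - u)‖ ≤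
      M * max ((1 - ε) ^ (μ - 1)) ((1 + ε) ^ (μ - 1)) * x ^ (μ - 1) := by
  have hx_pos : 0 < x := hx.1
  have hM : 0 ≤ M := nonneg_of_mul_nonneg_left ((abs_nonneg _).trans (hκ'' x hx)) (by positivity)
  have hu_pos : 0 < u := (mul_pos (sub_pos.2 hε) hx_pos).trans_le hu.1
  have hx_window : x ∈ Icc ((1 - ε) * x) ((1 + ε) * x) := by
    constructor <;> linarith [hu.1, hu.2]
  let s := Icc ((1 - ε) * x) ((1 + ε) * x) ∩ Ioc 0 δ
  have hs : s ⊆ Ioc 0 δ := inter_subset_right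
  refine norm_graph_cauchyKernel_sub_hilbertKernel_le ((convex_Icc _ _).inter (convex_Ioc _ _))
    (fun t ht ↦ (hκ t (hs ht)).mono hs) (fun t ht ↦ (hκ' t (hs ht)).mono hs) (fun t ht ↦ ?_)
    ⟨hx_window, hx⟩ ⟨hu, hu_pos, huδ⟩ hux
  calc |κ'' t| ≤ M * t ^ (μ - 1) := hκ'' t (hs ht)
    _ ≤ M * (max ((1 - ε) ^ (μ - 1)) ((1 + ε) ^ (μ - 1)) * x ^ (μ - 1)) := by
        gcongr; exact rpow_le_max_mul_rpow_of_mem_Icc _ (sub_pos.2 hε) hx_pos ht.1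
    _ = M * max ((1 - ε) ^ (μ - 1)) ((1 + ε) ^ (μ - 1)) * x ^ (μ - 1) := (mul_assoc _ _ _).symm

/-- Near-diagonal kernel estimate on one branch of a curve near a cusp:
for a graph `z(x) = x + iκ(x)` with `κ(0) = κ′(0) = 0` and `|κ″| ≤ M|x|^{μ−1}`, the
Cauchy kernel `(1+iκ′(x))/(z(x)−z(u))` equals the Hilbert-transform kernel `1/(x−u)` up
to an error of size `C x^{μ−1}` for `u` comparable to `x`, with `C = C(M, ε, μ)`. -/
theorem near_diagonal_kernel_estimate
    (μ M ε : ℝ) (hμ : μ ∈ Set.Ioc (0 : ℝ) 1) (hM : 0 < M) (hε : ε ∈ Set.Ioo (0 : ℝ) 1) :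
    ∃ C : ℝ, 0 < C ∧
      ∀ (δ : ℝ), 0 < δ →
      ∀ (κ κ' κ'' : ℝ → ℝ),
        (∀ x ∈ Icc (-δ) δ, HasDerivAt κ (κ' x) x) →
        κ 0 = 0 → κ' 0 = 0 →
        (∀ x ∈ Icc (-δ) δ, x ≠ 0 → HasDerivAt κ' (κ'' x) x) →
        (∀ x ∈ Icc (-δ) δ, x ≠ 0 → |κ'' x| ≤ M * |x| ^ (μ - 1)) →
        ∀ x ∈ Ioc (0 : ℝ) δ,
        ∀ u ∈ Icc ((1 - ε) * x) ((1 + ε) * x) ∩ Icc (-δ) δ, u ≠ x →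
          ‖(1 + Complex.I * (κ' x)) /
              (((x : ℂ) + Complex.I * κ x) - ((u : ℂ) + Complex.I * κ u)) -
            1 / ((x : ℂ) - (u : ℂ))‖ ≤ C * x ^ (μ - 1) := by
  have hC : 0 < (1 - ε) ^ (μ - 1) := rpow_pos_of_pos (sub_pos.2 hε.2) _
  refine ⟨M * max ((1 - ε) ^ (μ - 1)) ((1 + ε) ^ (μ - 1)), by positivity, ?_⟩
  intro δ hδ κ κ' κ'' hκ _ _ hκ' hκ'' x hx u hu hux
  have hs : Ioc 0 δ ⊆ Icc (-δ) δ := Ioc_subset_Icc_self.trans (Icc_subset_Icc_left (by linarith))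
  exact near_diagonal_kernel_estimate_general hε.2 (fun t ht ↦ (hκ t (hs ht)).hasDerivWithinAt)
    (fun t ht ↦ (hκ' t (hs ht) ht.1.ne').hasDerivWithinAt)
    (fun t ht ↦ by simpa only [abs_of_pos ht.1] using hκ'' t (hs ht) ht.1.ne') hx hu.1 hu.2.2 hux
end
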